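/- Let n ≥ 2 and let M^n be a smooth, closed, strictly convex hypersurface in ℝ^{n+1} enclosing the origin, with positive support function h. If M satisfies the isotropic L_p dual Minkowski equation h^{p-1} |Dh|^{n+1-q} 𝒦 = 1 on S^n (where 𝒦 is the Gauss curvature and Dh = ∇̄h + h x is the inverse Gauss map), and if −(n+1) ≤ p ≤ −n and 1 ≤ q < n+1, then M is the unit sphere. -/

import Mathlib

open MeasureTheory Matrix Metric
open scoped RealInnerProductSpace

noncomputable section

/-- Euclidean space `ℝ^{n+1}`. -/
abbrev Euc (n : ℕ) : Type := EuclideanSpace ℝ (Fin (n + 1))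

/-- The Euclidean Hessian matrix of `H : ℝ^{n+1} → ℝ` at `x`. -/
def ehess (n : ℕ) (H : Euc n → ℝ) (x : Euc n) : Matrix (Fin (n + 1)) (Fin (n + 1)) ℝ :=
  Matrix.of fun i j =>
    fderiv ℝ (fun y => fderiv ℝ H y (EuclideanSpace.single j 1)) x (EuclideanSpace.single i 1)

/-- For the 1-homogeneous extension `H` of the support function `h` and `x ∈ S^n`, the matrix
`D²H(x) + h(x)·x xᵀ`.  Its restriction to the tangent space `x^⊥ = T_x S^n` is
`A[h] = ∇̄²h + h ḡ`, and `x` is an eigenvector with eigenvalue `h(x)`. -/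
def bmat (n : ℕ) (H : Euc n → ℝ) (x : Euc n) : Matrix (Fin (n + 1)) (Fin (n + 1)) ℝ :=
  ehess n H x + Matrix.of fun i j => H x * (x i * x j)

/-- `σ_n = det A[h] = det(∇̄²h + h ḡ)/det ḡ`, computed as `det(bmat)/h`. -/
def sigman (n : ℕ) (H : Euc n → ℝ) (x : Euc n) : ℝ :=
  Matrix.det (bmat n H x) / H x

/-- The Gauss curvature `𝒦 = 1/σ_n`. -/
def gaussCurv (n : ℕ) (H : Euc n → ℝ) (x : Euc n) : ℝ := (sigman n H x)⁻¹

/-- The round (spherical) gradient `∇̄f` at `x ∈ S^n`: the Euclidean gradient of the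
0-homogeneous extension `y ↦ f(y/‖y‖)`.  It depends only on `f|_{S^n}` and lies in `T_x S^n`. -/
def sphGrad (n : ℕ) (f : Euc n → ℝ) (x : Euc n) : Euc n :=
  gradient (fun y => f (‖y‖⁻¹ • y)) x

/-- The function `log (h^{n+2}/𝒦)` (as a function of `y`; on the sphere it agrees with the
centro-affine expression appearing in the paper). -/
def logQ (n : ℕ) (H : Euc n → ℝ) (y : Euc n) : ℝ :=
  Real.log ((H y) ^ (n + 2) / gaussCurv n H y)

/-- The centro-affine inner product `g(∇f, ∇u) = h ⟨A[h]⁻¹ ∇̄f, ∇̄u⟩` of the `g`-gradients of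
`f` and `u`, where `g = A[h]/h` is the centro-affine metric. -/
def gInner (n : ℕ) (H f u : Euc n → ℝ) (x : Euc n) : ℝ :=
  H x * ∑ i, (bmat n H x)⁻¹.mulVec (fun j => sphGrad n f x j) i * sphGrad n u x i

/-- The squared centro-affine norm `|∇f|_g²` of the `g`-gradient of `f`. -/
def gNormSq (n : ℕ) (H f : Euc n → ℝ) (x : Euc n) : ℝ := gInner n H f f x

/-- The centro-affine Laplacian `Δf = div_g(∇ f)` (with respect to the centro-affine connection
`∇` induced by the centro-affine normal `ξ = X`, and the centro-affine metric `g = A[h]/h`),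
computed via the identity `Δf = tr_g(A[hf]/h) - n f`, i.e.
`Δf = tr(B[h]⁻¹ B[hf]) - (n+1) f` where `B[u] = D²ũ + u·x xᵀ` for the 1-homogeneous
extension `ũ` of `u`. -/
def caLap (n : ℕ) (H f : Euc n → ℝ) (x : Euc n) : ℝ :=
  Matrix.trace ((bmat n H x)⁻¹ * bmat n (fun y => H y * f (‖y‖⁻¹ • y)) x) - (n + 1) * f x

/-- The spherical Lebesgue measure on `S^n ⊂ ℝ^{n+1}` (up to a positive constant). -/
def sphMeasure (n : ℕ) : Measure (sphere (0 : Euc n) 1) :=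
  (volume : Measure (Euc n)).toSphere

/-- The density of the cone-volume-type measure `dV = h σ_n dμ` with respect to the spherical
Lebesgue measure. -/
def volDens (n : ℕ) (H : Euc n → ℝ) (x : Euc n) : ℝ := H x * sigman n H x

/-
Write `g` for the Hessian of `H² / 2`, a Riemannian metric on `ℝ^{n+1} \ {0}`, and let `μ` be the
cone-volume measure of `{H ≤ 1}` on the sphere. Prékopa–Leindler applied to the sublevel sets of
second-order perturbations of `H` gives the linearized Brunn–Minkowski inequality: for every
1-homogeneous `G`,
`(n + 1) ∫ (G / H)² dμ ≤ ∫ |dG|²_g dμ + n (∫ G / H dμ)² / μ(S^n)`.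
With `a = n + 1 - q` and `b = n + 1 + p` the equation reads `det g = |DH|^a (H / ‖·‖)^b`. Apply the
inequality to `G_i = (H / ‖y‖)^b y_i` and sum over `i`. As the cofactor matrix of `g` is
divergence-free, integrating by parts with the equation turns this into
`∑ Var(w_i) ≤ 0`, where `w = (H / ‖y‖)^b (y / H - DH / |DH|²)` and `0 < a ≤ n`, `0 ≤ b ≤ 1` give the
discarded terms a sign. So `w` is constant; it is orthogonal to `DH`, so Euler's relation at `y = w`
forces `w = 0`. Then `DH` is radial, `H = c ‖·‖`, and the equation gives `c = 1`.
-/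

section PrekopaLeindler

lemma midpoint_real (x y : ℝ) : midpoint ℝ x y = (x + y) / 2 := by
  rw [midpoint_eq_smul_add, invOf_eq_inv, smul_eq_mul, inv_mul_eq_div]

lemma volume_preimage_midpoint (m : ℝ) (S : Set ℝ) :
    volume ((midpoint ℝ m) ⁻¹' S) = 2 * volume S := by
  have hpre : midpoint ℝ m ⁻¹' S = (2⁻¹ * ·) ⁻¹' ((m / 2 + ·) ⁻¹' S) := by
    ext a
    rw [Set.mem_preimage, midpoint_real, add_div, div_eq_inv_mul a]
    rfl
  rw [hpre, Real.volume_preimage_mul_left (by norm_num), measure_preimage_add]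
  norm_num

lemma volume_add_le_of_isCompact_of_midpoint_mem {A B C : Set ℝ} (hA : IsCompact A)
    (hB : IsCompact B) (hA₀ : A.Nonempty) (hB₀ : B.Nonempty)
    (h : ∀ a ∈ A, ∀ b ∈ B, midpoint ℝ a b ∈ C) : volume A + volume B ≤ 2 * volume C := by
  obtain ⟨a, haA, ha⟩ := hA.exists_isGreatest hA₀
  obtain ⟨b, hbB, hb⟩ := hB.exists_isLeast hB₀
  set m := midpoint ℝ a b with hm
  have hleft : volume A ≤ 2 * volume (C ∩ Set.Iic m) := by
    rw [← volume_preimage_midpoint b]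
    refine measure_mono fun x hx ↦ ⟨by simpa only [midpoint_comm] using h x hx b hbB, ?_⟩
    rw [Set.mem_Iic, hm, midpoint_real, midpoint_real]
    linarith [ha hx]
  have hright : volume B ≤ 2 * volume (C ∩ Set.Ici m) := by
    rw [← volume_preimage_midpoint a]
    refine measure_mono fun y hy ↦ ⟨h a haA y hy, ?_⟩
    rw [Set.mem_Ici, hm, midpoint_real, midpoint_real]
    linarith [hb hy]
  have hnull : volume (C ∩ Set.Ici m) = volume (C \ Set.Iic m) := by
    rw [Set.sdiff_eq, Set.compl_Iic]
    exact measure_congr (ae_eq_set_inter ae_eq_rfl Ioi_ae_eq_Ici.symm)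
  calc volume A + volume B ≤ 2 * volume (C ∩ Set.Iic m) + 2 * volume (C \ Set.Iic m) :=
        add_le_add hleft (hnull ▸ hright)
    _ = 2 * volume C := by rw [← mul_add, measure_inter_add_sdiff _ measurableSet_Iic]

lemma volume_add_le_of_midpoint_mem {A B C : Set ℝ} (hA : MeasurableSet A)
    (hB : MeasurableSet B) (hA₀ : A.Nonempty) (hB₀ : B.Nonempty)
    (h : ∀ a ∈ A, ∀ b ∈ B, midpoint ℝ a b ∈ C) : volume A + volume B ≤ 2 * volume C := by
  obtain ⟨a, ha⟩ := hA₀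
  obtain ⟨b, hb⟩ := hB₀
  rw [hA.measure_eq_iSup_isCompact, hB.measure_eq_iSup_isCompact]
  simp only [iSup_and']
  refine ENNReal.biSup_add_biSup_le' ⟨∅, Set.empty_subset _, isCompact_empty⟩
    ⟨∅, Set.empty_subset _, isCompact_empty⟩ ?_
  rintro K ⟨hKA, hK⟩ L ⟨hLB, hL⟩
  calc volume K + volume L ≤ volume (insert a K) + volume (insert b L) := by
        gcongr <;> exact Set.subset_insert _ _
    _ ≤ 2 * volume C :=
        volume_add_le_of_isCompact_of_midpoint_mem (hK.insert a) (hL.insert b)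
          (Set.insert_nonempty _ _) (Set.insert_nonempty _ _) fun x hx y hy ↦
            h x (Set.insert_subset ha hKA hx) y (Set.insert_subset hb hLB hy)

lemma lintegral_eq_lintegral_Ioi_meas_lt {α : Type*} [MeasurableSpace α] (μ : Measure α)
    {u : α → ENNReal} (hu : Measurable u) (hu_top : ∀ x, u x ≠ ⊤) :
    ∫⁻ x, u x ∂μ = ∫⁻ t in Set.Ioi (0 : ℝ), μ {a | ENNReal.ofReal t < u a} := by
  have hlayer := lintegral_eq_lintegral_meas_lt μ (f := fun x ↦ (u x).toReal)
    (.of_forall fun x ↦ ENNReal.toReal_nonneg) hu.ennreal_toReal.aemeasurable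
  simp only [ENNReal.ofReal_toReal (hu_top _)] at hlayer
  rw [hlayer]
  refine setLIntegral_congr_fun measurableSet_Ioi fun t ht ↦ ?_
  simp only [ENNReal.ofReal_lt_iff_lt_toReal (le_of_lt ht) (hu_top _)]

lemma lintegral_add_le_of_mul_le_sq_midpoint {u v w : ℝ → ENNReal} (hu : Measurable u)
    (hv : Measurable v) (hw : Measurable w) (hu_sup : ⨆ x, u x = 1) (hv_sup : ⨆ x, v x = 1)
    (h : ∀ x y, u x * v y ≤ w (midpoint ℝ x y) ^ 2) :
    (∫⁻ x, u x) + ∫⁻ x, v x ≤ 2 * ∫⁻ x, w x := by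
  have hu_le (x : ℝ) : u x ≤ 1 := hu_sup ▸ le_iSup u x
  have hv_le (x : ℝ) : v x ≤ 1 := hv_sup ▸ le_iSup v x
  have ne_top {r : ENNReal} (hr : r ≤ 1) : r ≠ ⊤ := ne_top_of_le_ne_top ENNReal.one_ne_top hr
  suffices (∫⁻ x, u x) + ∫⁻ x, v x ≤ 2 * ∫⁻ x, min (w x) 1 from
    this.trans (mul_le_mul_right (lintegral_mono fun x ↦ min_le_left _ _) 2)
  have hanti : Antitone fun t : ℝ ↦ volume {a | ENNReal.ofReal t < u a} := fun s t hst ↦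
    measure_mono fun a ha ↦ (ENNReal.ofReal_le_ofReal hst).trans_lt ha
  rw [lintegral_eq_lintegral_Ioi_meas_lt _ hu fun x ↦ ne_top (hu_le x),
    lintegral_eq_lintegral_Ioi_meas_lt _ hv fun x ↦ ne_top (hv_le x),
    lintegral_eq_lintegral_Ioi_meas_lt _ (hw.min measurable_const) fun x ↦
      ne_top (min_le_right _ _),
    ← lintegral_const_mul' _ _ (by norm_num), ← lintegral_add_left hanti.measurable]
  refine lintegral_mono fun t ↦ ?_
  rcases lt_or_ge (ENNReal.ofReal t) 1 with ht | ht
  · refine volume_add_le_of_midpoint_mem (measurableSet_lt measurable_const hu)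
      (measurableSet_lt measurable_const hv) (lt_iSup_iff.1 (ht.trans_eq hu_sup.symm))
      (lt_iSup_iff.1 (ht.trans_eq hv_sup.symm)) fun a ha b hb ↦ lt_min ?_ ht
    refine lt_of_pow_lt_pow_left' 2 ?_
    calc ENNReal.ofReal t ^ 2 = ENNReal.ofReal t * ENNReal.ofReal t := sq _
      _ < u a * v b := ENNReal.mul_lt_mul ha hb
      _ ≤ w (midpoint ℝ a b) ^ 2 := h a b
  · have hempty {r : ℝ → ENNReal} (hr : ∀ x, r x ≤ 1) : {a | ENNReal.ofReal t < r a} = ∅ :=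
      Set.eq_empty_of_forall_notMem fun a ha ↦ (ha.trans_le (hr a)).not_ge ht
    simp [hempty hu_le, hempty hv_le]

lemma ennreal_four_mul_le_sq_add (a b : ENNReal) : 4 * (a * b) ≤ (a + b) ^ 2 := by
  rcases eq_or_ne a ⊤ with rfl | ha
  · simp
  rcases eq_or_ne b ⊤ with rfl | hb
  · simp
  lift a to NNReal using ha
  lift b to NNReal using hb
  exact_mod_cast (mul_assoc 4 a b).symm.trans_le (four_mul_le_sq_add a b)

lemma lintegral_mul_le_sq_of_iSup_ne_top {u v w : ℝ → ENNReal} (hu : Measurable u)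
    (hv : Measurable v) (hw : Measurable w) (hu_top : ⨆ x, u x ≠ ⊤) (hv_top : ⨆ x, v x ≠ ⊤)
    (h : ∀ x y, u x * v y ≤ w (midpoint ℝ x y) ^ 2) :
    (∫⁻ x, u x) * ∫⁻ x, v x ≤ (∫⁻ x, w x) ^ 2 := by
  set α := ⨆ x, u x with hα
  set β := ⨆ x, v x with hβ
  rcases eq_or_ne α 0 with hα₀ | hα₀
  · simp [ENNReal.iSup_eq_zero.1 hα₀]
  rcases eq_or_ne β 0 with hβ₀ | hβ₀
  · simp [ENNReal.iSup_eq_zero.1 hβ₀]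
  set γ := (α * β) ^ (1 / 2 : ℝ) with hγ
  have hγ_sq : γ ^ 2 = α * β := by
    rw [hγ, ← ENNReal.rpow_natCast, ← ENNReal.rpow_mul]
    norm_num
  have hinv : α⁻¹ * β⁻¹ = γ⁻¹ ^ 2 := by
    rw [← ENNReal.inv_pow, hγ_sq, ENNReal.mul_inv (.inl hα₀) (.inl hu_top)]
  have hsum := lintegral_add_le_of_mul_le_sq_midpoint (hu.const_mul α⁻¹) (hv.const_mul β⁻¹)
    (hw.const_mul γ⁻¹) (by rw [← ENNReal.mul_iSup, ← hα, ENNReal.inv_mul_cancel hα₀ hu_top])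
    (by rw [← ENNReal.mul_iSup, ← hβ, ENNReal.inv_mul_cancel hβ₀ hv_top]) fun x y ↦ by
      rw [mul_mul_mul_comm, hinv, mul_pow]
      gcongr
      exact h x y
  rw [lintegral_const_mul _ hu, lintegral_const_mul _ hv, lintegral_const_mul _ hw] at hsum
  have hscaled : γ⁻¹ ^ 2 * 4 * ((∫⁻ x, u x) * ∫⁻ x, v x) ≤ γ⁻¹ ^ 2 * 4 * (∫⁻ x, w x) ^ 2 :=
    calc γ⁻¹ ^ 2 * 4 * ((∫⁻ x, u x) * ∫⁻ x, v x)
        = 4 * ((α⁻¹ * ∫⁻ x, u x) * (β⁻¹ * ∫⁻ x, v x)) := by rw [← hinv]; ring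
      _ ≤ (2 * (γ⁻¹ * ∫⁻ x, w x)) ^ 2 :=
        (ennreal_four_mul_le_sq_add _ _).trans (pow_le_pow_left' hsum 2)
      _ = γ⁻¹ ^ 2 * 4 * (∫⁻ x, w x) ^ 2 := by ring
  rw [← hinv] at hscaled
  exact (ENNReal.mul_le_mul_iff_right (by simp [hu_top, hv_top])
    (by simp [ENNReal.mul_eq_top, hα₀, hβ₀])).1 hscaled

/-- The measure space `α` satisfies the Prékopa–Leindler inequality for midpoints, stated with
squares instead of square roots. -/
def MidpointPrekopaLeindler (α : Type*) [AddCommGroup α] [Module ℝ α] [MeasureSpace α] : Prop :=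
  ∀ u v w : α → ENNReal, Measurable u → Measurable v → Measurable w →
    (∀ x y, u x * v y ≤ w (midpoint ℝ x y) ^ 2) →
    (∫⁻ x, u x) * ∫⁻ x, v x ≤ (∫⁻ x, w x) ^ 2

lemma lintegral_eq_iSup_lintegral_min_natCast {α : Type*} [MeasurableSpace α] (μ : Measure α)
    {f : α → ENNReal} (hf : Measurable f) :
    ∫⁻ x, f x ∂μ = ⨆ k : ℕ, ∫⁻ x, min (f x) k ∂μ := by
  rw [← lintegral_iSup (fun k ↦ hf.min measurable_const) fun k l hkl x ↦
    min_le_min le_rfl (by exact_mod_cast hkl)]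
  simp only [← inf_iSup_eq, ENNReal.iSup_natCast, inf_top_eq]

namespace MidpointPrekopaLeindler

lemma real : MidpointPrekopaLeindler ℝ := by
  intro u v w hu hv hw h
  rw [lintegral_eq_iSup_lintegral_min_natCast _ hu, lintegral_eq_iSup_lintegral_min_natCast _ hv,
    ENNReal.iSup_mul]
  simp only [ENNReal.mul_iSup]
  have iSup_ne_top (f : ℝ → ENNReal) (k : ℕ) : ⨆ x, min (f x) k ≠ ⊤ :=
    ne_top_of_le_ne_top (ENNReal.natCast_ne_top k) (iSup_le fun x ↦ min_le_right _ _)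
  refine iSup₂_le fun k l ↦ lintegral_mul_le_sq_of_iSup_ne_top (hu.min measurable_const)
    (hv.min measurable_const) hw (iSup_ne_top u k) (iSup_ne_top v l) fun x y ↦ (h x y).trans' ?_
  gcongr <;> exact min_le_left _ _

variable {α β : Type*} [AddCommGroup α] [Module ℝ α] [MeasureSpace α] [AddCommGroup β]
  [Module ℝ β] [MeasureSpace β]

lemma prod [SFinite (volume : Measure β)] (hα : MidpointPrekopaLeindler α)
    (hβ : MidpointPrekopaLeindler β) : MidpointPrekopaLeindler (α × β) := by
  intro u v w hu hv hw h
  rw [Measure.volume_eq_prod, lintegral_prod _ hu.aemeasurable, lintegral_prod _ hv.aemeasurable,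
    lintegral_prod _ hw.aemeasurable]
  refine hα _ _ _ hu.lintegral_prod_right' hv.lintegral_prod_right' hw.lintegral_prod_right'
    fun x y ↦ hβ _ _ _ (hu.comp measurable_prodMk_left) (hv.comp measurable_prodMk_left)
      (hw.comp measurable_prodMk_left) fun a b ↦ h (x, a) (y, b)

lemma of_measurePreserving (e : α →ₗ[ℝ] β) (he : MeasurePreserving e)
    (hα : MidpointPrekopaLeindler α) : MidpointPrekopaLeindler β := by
  intro u v w hu hv hw h
  rw [← he.lintegral_comp hu, ← he.lintegral_comp hv, ← he.lintegral_comp hw]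
  refine hα _ _ _ (hu.comp he.measurable) (hv.comp he.measurable) (hw.comp he.measurable)
    fun x y ↦ ?_
  rw [show e (midpoint ℝ x y) = midpoint ℝ (e x) (e y) from e.toAffineMap.map_midpoint x y]
  exact h _ _

lemma pi (m : ℕ) : MidpointPrekopaLeindler (Fin m → ℝ) := by
  induction m with
  | zero =>
    intro u v w _ _ _ h
    rw [Measure.volume_pi_eq_dirac (x := default), lintegral_dirac, lintegral_dirac,
      lintegral_dirac]
    exact (h default default).trans_eq (by rw [midpoint_self])
  | succ m ih =>
    have hcons : ⇑(Fin.consLinearEquiv ℝ fun _ : Fin (m + 1) ↦ ℝ).toLinearMap =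
        (MeasurableEquiv.piFinSuccAbove (fun _ ↦ ℝ) 0).symm := by
      ext x i
      simp [MeasurableEquiv.piFinSuccAbove]
    exact (real.prod ih).of_measurePreserving (Fin.consLinearEquiv ℝ fun _ ↦ ℝ).toLinearMap
      (hcons ▸ (volume_preserving_piFinSuccAbove (fun _ ↦ ℝ) 0).symm)

lemma euclideanSpace (m : ℕ) : MidpointPrekopaLeindler (EuclideanSpace ℝ (Fin m)) :=
  (pi m).of_measurePreserving (WithLp.linearEquiv 2 ℝ (Fin m → ℝ)).symm.toLinearMap
    (PiLp.volume_preserving_toLp (Fin m))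

lemma measure_mul_le_sq (hα : MidpointPrekopaLeindler α) {A B C : Set α} (hA : MeasurableSet A)
    (hB : MeasurableSet B) (hC : MeasurableSet C)
    (h : ∀ a ∈ A, ∀ b ∈ B, midpoint ℝ a b ∈ C) :
    volume A * volume B ≤ volume C ^ 2 := by
  have hind := hα (A.indicator 1) (B.indicator 1) (C.indicator 1) (measurable_one.indicator hA)
    (measurable_one.indicator hB) (measurable_one.indicator hC) fun x y ↦ by
      by_cases hx : x ∈ A
      · by_cases hy : y ∈ B
        · simp [hx, hy, h x hx y hy]
        · simp [hy]
      · simp [hx]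
  simpa only [lintegral_indicator_one, hA, hB, hC] using hind

end MidpointPrekopaLeindler

end PrekopaLeindler

section Gradient

variable {n : ℕ}

/-- The Euclidean gradient as a coordinate vector, so that it can be fed to matrices; the entry
`grad f y i` is the `i`-th partial derivative of `f` at `y`. -/
def grad (f : Euc n → ℝ) (y : Euc n) : Fin (n + 1) → ℝ :=
  fun i ↦ fderiv ℝ f y (EuclideanSpace.single i 1)

variable {f g : Euc n → ℝ} {y : Euc n}

lemma fderiv_eq_grad_dotProduct (f : Euc n → ℝ) (y v : Euc n) :
    fderiv ℝ f y v = grad f y ⬝ᵥ v := by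
  have hv : v = ∑ i, v i • EuclideanSpace.single i (1 : ℝ) := by
    ext j
    simp [Finset.sum_apply, Pi.single_apply]
  conv_lhs => rw [hv]
  simp [dotProduct, grad, mul_comm]

lemma gradient_eq_toLp_grad (f : Euc n → ℝ) (y : Euc n) :
    gradient f y = WithLp.toLp 2 (grad f y) := by
  refine ext_inner_right ℝ fun v ↦ ?_
  rw [gradient, InnerProductSpace.toDual_symm_apply, fderiv_eq_grad_dotProduct]
  simp [PiLp.inner_apply, dotProduct, mul_comm]

lemma grad_congr {s : Set (Euc n)} (hs : s ∈ nhds y) (h : Set.EqOn f g s) :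
    grad f y = grad g y := by
  ext i
  rw [grad, grad, (h.eventuallyEq_of_mem hs).fderiv_eq]

lemma grad_const (c : ℝ) : grad (fun _ ↦ c) y = 0 := by
  ext i
  simp [grad]

lemma grad_add (hf : DifferentiableAt ℝ f y) (hg : DifferentiableAt ℝ g y) :
    grad (fun z ↦ f z + g z) y = grad f y + grad g y := by
  ext i
  simp [grad, fderiv_fun_add hf hg]

lemma grad_mul (hf : DifferentiableAt ℝ f y) (hg : DifferentiableAt ℝ g y) :
    grad (fun z ↦ f z * g z) y = f y • grad g y + g y • grad f y := by
  ext i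
  simp [grad, fderiv_fun_mul hf hg]

lemma grad_sum {ι : Type*} {s : Finset ι} {f : ι → Euc n → ℝ}
    (hf : ∀ j ∈ s, DifferentiableAt ℝ (f j) y) :
    grad (fun z ↦ ∑ j ∈ s, f j z) y = ∑ j ∈ s, grad (f j) y := by
  ext i
  simp [grad, fderiv_fun_sum hf]

lemma grad_comp {φ : ℝ → ℝ} {φ' : ℝ} (hφ : HasDerivAt φ φ' (f y)) (hf : DifferentiableAt ℝ f y) :
    grad (fun z ↦ φ (f z)) y = φ' • grad f y := by
  ext i
  have hcomp := (hφ.comp_hasFDerivAt y hf.hasFDerivAt).fderiv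
  simp only [Function.comp_def] at hcomp
  simp [grad, hcomp]

lemma grad_rpow (hf : DifferentiableAt ℝ f y) (hpos : 0 < f y) (r : ℝ) :
    grad (fun z ↦ f z ^ r) y = (r * f y ^ r / f y) • grad f y := by
  rw [grad_comp (Real.hasDerivAt_rpow_const (Or.inl hpos.ne')) hf, Real.rpow_sub_one hpos.ne',
    mul_div_assoc]

lemma grad_coord (j : Fin (n + 1)) (y : Euc n) : grad (fun z ↦ z j) y = Pi.single j 1 := by
  have hproj := (EuclideanSpace.proj j : Euc n →L[ℝ] ℝ).hasFDerivAt (x := y)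
  ext i
  simp only [grad, Pi.single_apply]
  rw [show (fun z : Euc n ↦ z j) = EuclideanSpace.proj j from rfl, hproj.fderiv]
  simp [eq_comm]

lemma grad_norm (hy : y ≠ 0) : grad (fun z ↦ ‖z‖) y = ‖y‖⁻¹ • ⇑y := by
  have hsq := (hasStrictFDerivAt_norm_sq y).hasFDerivAt
  have hgrad_sq : grad (fun z ↦ ‖z‖ ^ 2) y = (2 : ℝ) • ⇑y := by
    ext i
    simp [grad, hsq.fderiv, EuclideanSpace.inner_single_right]
  have hnorm : DifferentiableAt ℝ (fun z : Euc n ↦ ‖z‖) y := differentiableAt_id.norm ℝ hy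
  have hne : ‖y‖ ≠ 0 := norm_ne_zero_iff.2 hy
  rw [grad_comp (φ := (· ^ 2)) (hasDerivAt_pow 2 ‖y‖) hnorm] at hgrad_sq
  ext i
  have hi := congrFun hgrad_sq i
  simp only [Pi.smul_apply, smul_eq_mul, Nat.cast_ofNat, Nat.add_one_sub_one, pow_one] at hi ⊢
  field_simp
  linarith

lemma dotProduct_self_eq_norm_sq (y : Euc n) : ⇑y ⬝ᵥ ⇑y = ‖y‖ ^ 2 := by
  rw [EuclideanSpace.real_norm_sq_eq]
  exact Finset.sum_congr rfl fun i _ ↦ (sq _).symm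

end Gradient

section SmoothHomog

/-- `f` is smooth away from the origin and positively homogeneous of degree `k`. Nothing is asked
of `f` near the origin, so that negative degrees are allowed. -/
structure SmoothHomog {n : ℕ} (k : ℤ) (f : Euc n → ℝ) : Prop where
  contDiffOn : ContDiffOn ℝ (⊤ : ℕ∞) f {0}ᶜ
  map_smul : ∀ c : ℝ, 0 < c → ∀ y, f (c • y) = c ^ k * f y

namespace SmoothHomog

variable {n : ℕ} {k l : ℤ} {f g : Euc n → ℝ} {y : Euc n}

lemma contDiffAt (hf : SmoothHomog k f) (hy : y ≠ 0) : ContDiffAt ℝ (⊤ : ℕ∞) f y :=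
  hf.contDiffOn.contDiffAt (isOpen_compl_singleton.mem_nhds hy)

lemma differentiableAt (hf : SmoothHomog k f) (hy : y ≠ 0) : DifferentiableAt ℝ f y :=
  (hf.contDiffAt hy).differentiableAt (by simp)

lemma of_eq (hf : SmoothHomog k f) (h : k = l) : SmoothHomog l f := h ▸ hf

lemma const (c : ℝ) : SmoothHomog 0 fun _ : Euc n ↦ c :=
  ⟨contDiffOn_const, fun _ _ _ ↦ by simp⟩

lemma coord (i : Fin (n + 1)) : SmoothHomog 1 fun y : Euc n ↦ y i :=
  ⟨ContDiff.contDiffOn (by fun_prop), fun _ _ _ ↦ by simp⟩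

lemma norm : SmoothHomog 1 fun y : Euc n ↦ ‖y‖ :=
  ⟨fun _ hy ↦ (contDiffAt_norm ℝ hy).contDiffWithinAt, fun c hc y ↦ by
    rw [norm_smul, Real.norm_of_nonneg hc.le, zpow_one]⟩

lemma add (hf : SmoothHomog k f) (hg : SmoothHomog k g) : SmoothHomog k fun y ↦ f y + g y :=
  ⟨hf.contDiffOn.add hg.contDiffOn, fun c hc y ↦ by
    rw [hf.map_smul c hc, hg.map_smul c hc, mul_add]⟩

lemma sum {ι : Type*} {s : Finset ι} {f : ι → Euc n → ℝ} (hf : ∀ i ∈ s, SmoothHomog k (f i)) :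
    SmoothHomog k fun y ↦ ∑ i ∈ s, f i y :=
  ⟨ContDiffOn.sum fun i hi ↦ (hf i hi).contDiffOn, fun c hc y ↦ by
    rw [Finset.mul_sum]
    exact Finset.sum_congr rfl fun i hi ↦ (hf i hi).map_smul c hc y⟩

lemma mul (hf : SmoothHomog k f) (hg : SmoothHomog l g) :
    SmoothHomog (k + l) fun y ↦ f y * g y :=
  ⟨hf.contDiffOn.mul hg.contDiffOn, fun c hc y ↦ by
    rw [hf.map_smul c hc, hg.map_smul c hc, zpow_add₀ hc.ne', mul_mul_mul_comm]⟩

lemma const_mul (hf : SmoothHomog k f) (a : ℝ) : SmoothHomog k fun y ↦ a * f y :=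
  ((const a).mul hf).of_eq (zero_add k)

lemma inv (hf : SmoothHomog k f) (h : ∀ y ≠ 0, f y ≠ 0) : SmoothHomog (-k) fun y ↦ (f y)⁻¹ :=
  ⟨hf.contDiffOn.inv h, fun c hc y ↦ by rw [hf.map_smul c hc, mul_inv, _root_.zpow_neg]⟩

lemma div (hf : SmoothHomog k f) (hg : SmoothHomog l g) (h : ∀ y ≠ 0, g y ≠ 0) :
    SmoothHomog (k - l) fun y ↦ f y / g y := by
  simpa only [div_eq_mul_inv, sub_eq_add_neg] using hf.mul (hg.inv h)

lemma pow (hf : SmoothHomog k f) (m : ℕ) : SmoothHomog (k * m) fun y ↦ f y ^ m :=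
  ⟨hf.contDiffOn.pow m, fun c hc y ↦ by rw [hf.map_smul c hc, mul_pow, _root_.zpow_mul,
    zpow_natCast]⟩

lemma rpow (hf : SmoothHomog 0 f) (h : ∀ y ≠ 0, f y ≠ 0) (r : ℝ) :
    SmoothHomog 0 fun y ↦ f y ^ r :=
  ⟨hf.contDiffOn.rpow_const_of_ne h, fun c hc y ↦ by rw [hf.map_smul c hc, zpow_zero, one_mul,
    one_mul]⟩

lemma grad_apply (hf : SmoothHomog k f) (i : Fin (n + 1)) :
    SmoothHomog (k - 1) fun y ↦ grad f y i where
  contDiffOn := (hf.contDiffOn.fderiv_of_isOpen isOpen_compl_singleton (m := (⊤ : ℕ∞))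
    (by simp)).clm_apply contDiffOn_const
  map_smul c hc y := by
    have hscale : c • fderiv ℝ f (c • y) = c ^ k • fderiv ℝ f y := by
      rw [← fderiv_comp_smul, show (fun z ↦ f (c • z)) = c ^ k • f from funext (hf.map_smul c hc),
        fderiv_const_smul_field, Pi.smul_apply]
    have hi := congrArg (fun L ↦ L (EuclideanSpace.single i 1)) hscale
    simp only [_root_.smul_apply, smul_eq_mul] at hi
    rw [grad, grad, zpow_sub_one₀ hc.ne', mul_right_comm, ← hi]
    field_simp

lemma dotProduct_grad (hf : SmoothHomog k f) (hy : y ≠ 0) : ⇑y ⬝ᵥ grad f y = k * f y := by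
  have hray : HasDerivAt (fun c : ℝ ↦ c • y) y 1 := by
    simpa using (hasDerivAt_id (1 : ℝ)).smul_const y
  have hfd : HasFDerivAt f (fderiv ℝ f y) ((1 : ℝ) • y) := by
    rw [one_smul]
    exact (hf.differentiableAt hy).hasFDerivAt
  have hpow : HasDerivAt (fun c : ℝ ↦ c ^ k * f y) (k * f y) 1 := by
    simpa using (hasDerivAt_zpow k (1 : ℝ) (.inl one_ne_zero)).mul_const (f y)
  rw [dotProduct_comm, ← fderiv_eq_grad_dotProduct]
  refine (hfd.comp_hasDerivAt (1 : ℝ) hray).unique (hpow.congr_of_eventuallyEq ?_)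
  filter_upwards [lt_mem_nhds (zero_lt_one' ℝ)] with c hc
  exact hf.map_smul c hc y

lemma ehess_eq (hf : SmoothHomog k f) (hy : y ≠ 0) (i j : Fin (n + 1)) :
    ehess n f y i j =
      fderiv ℝ (fderiv ℝ f) y (EuclideanSpace.single i 1) (EuclideanSpace.single j 1) := by
  have hdiff : DifferentiableAt ℝ (fderiv ℝ f) y :=
    ((hf.contDiffAt hy).fderiv_right (m := (⊤ : ℕ∞)) (by simp)).differentiableAt (by simp)
  rw [ehess, Matrix.of_apply, fderiv_clm_apply hdiff (differentiableAt_const _)]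
  simp

lemma isSymm_ehess (hf : SmoothHomog k f) (hy : y ≠ 0) : (ehess n f y).IsSymm := by
  ext i j
  rw [transpose_apply, hf.ehess_eq hy, hf.ehess_eq hy]
  refine (hf.contDiffAt hy).isSymmSndFDerivAt ?_ _ _
  rw [minSmoothness_of_isRCLikeNormedField]
  exact WithTop.coe_le_coe.2 (le_top : (2 : ℕ∞) ≤ ⊤)

end SmoothHomog

end SmoothHomog

section MatrixCalculus

variable {n : ℕ} {ι : Type*}

/-- The entrywise `k`-th partial derivative of a matrix-valued function. -/
def partialMatrix (k : Fin (n + 1)) (A : Euc n → Matrix ι ι ℝ) (y : Euc n) : Matrix ι ι ℝ :=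
  Matrix.of fun i j ↦ grad (fun z ↦ A z i j) y k

variable [Fintype ι] {A B : Euc n → Matrix ι ι ℝ} {y : Euc n}

lemma partialMatrix_mul (hA : ∀ i j, DifferentiableAt ℝ (fun z ↦ A z i j) y)
    (hB : ∀ i j, DifferentiableAt ℝ (fun z ↦ B z i j) y) (k : Fin (n + 1)) :
    partialMatrix k (fun z ↦ A z * B z) y =
      A y * partialMatrix k B y + partialMatrix k A y * B y := by
  ext i j
  simp only [partialMatrix, Matrix.of_apply, Matrix.mul_apply, Matrix.add_apply]
  rw [grad_sum fun l _ ↦ (hA i l).fun_mul (hB l j), Finset.sum_apply, ← Finset.sum_add_distrib]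
  refine Finset.sum_congr rfl fun l _ ↦ ?_
  rw [grad_mul (hA i l) (hB l j)]
  simp [mul_comm]

variable [DecidableEq ι]

/-- The determinant as a continuous multilinear function of the rows. -/
def detRowMultilinear (ι : Type*) [Fintype ι] [DecidableEq ι] :
    ContinuousMultilinearMap ℝ (fun _ : ι ↦ ι → ℝ) ℝ where
  toMultilinearMap := (detRowAlternating : (ι → ℝ) [⋀^ι]→ₗ[ℝ] ℝ).toMultilinearMap
  cont := continuous_id.matrix_det

lemma differentiableAt_det (hA : ∀ i j, DifferentiableAt ℝ (fun z ↦ A z i j) y) :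
    DifferentiableAt ℝ (fun z ↦ (A z).det) y :=
  (HasFDerivAt.multilinear_comp (f := detRowMultilinear ι) (g := fun i z ↦ A z i)
    fun i ↦ (differentiableAt_pi.2 (hA i)).hasFDerivAt).differentiableAt

lemma grad_det_eq_trace_adjugate_mul (hA : ∀ i j, DifferentiableAt ℝ (fun z ↦ A z i j) y)
    (k : Fin (n + 1)) :
    grad (fun z ↦ (A z).det) y k = trace ((A y).adjugate * partialMatrix k A y) := by
  have hrow (i : ι) : HasFDerivAt (fun z ↦ A z i)
      (ContinuousLinearMap.pi fun j ↦ fderiv ℝ (fun z ↦ A z i j) y) y :=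
    hasFDerivAt_pi.2 fun j ↦ (hA i j).hasFDerivAt
  have hdet := (HasFDerivAt.multilinear_comp (f := detRowMultilinear ι) hrow).fderiv
  rw [grad, show (fun z ↦ (A z).det) = fun z ↦ detRowMultilinear ι fun i ↦ A z i from rfl, hdet,
    trace_mul_comm]
  simp only [_root_.sum_apply, ContinuousLinearMap.comp_apply, trace, diag_apply]
  refine Finset.sum_congr rfl fun i _ ↦ ?_
  have hcramer := congrFun (cramer_eq_adjugate_mulVec (A y)ᵀ fun j ↦ partialMatrix k A y i j) i
  rw [cramer_transpose_apply, ← adjugate_transpose, mulVec_transpose] at hcramer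
  exact hcramer

lemma differentiableAt_inv_apply (hA : ∀ i j, DifferentiableAt ℝ (fun z ↦ A z i j) y)
    (hdet : (A y).det ≠ 0) (i j : ι) : DifferentiableAt ℝ (fun z ↦ (A z)⁻¹ i j) y := by
  simp only [inv_def, Ring.inverse_eq_inv', Matrix.smul_apply, smul_eq_mul, adjugate_apply]
  refine ((differentiableAt_det hA).inv hdet).mul (differentiableAt_det fun k l ↦ ?_)
  rcases eq_or_ne k j with rfl | hkj
  · simp only [updateRow_self]
    exact differentiableAt_const _
  · simpa only [updateRow_ne hkj] using hA k l

lemma partialMatrix_inv (hA : ∀ i j, DifferentiableAt ℝ (fun z ↦ A z i j) y)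
    (hdet : (A y).det ≠ 0) (k : Fin (n + 1)) :
    partialMatrix k (fun z ↦ (A z)⁻¹) y = -((A y)⁻¹ * partialMatrix k A y * (A y)⁻¹) := by
  have hunit : IsUnit (A y).det := hdet.isUnit
  have hone : partialMatrix k (fun z ↦ (A z)⁻¹ * A z) y = 0 := by
    ext i j
    have hev := (differentiableAt_det hA).continuousAt.eventually_ne hdet
    rw [partialMatrix, Matrix.of_apply, grad_congr (g := fun _ ↦ (1 : Matrix ι ι ℝ) i j) hev
      fun z hz ↦ by rw [nonsing_inv_mul _ (Ne.isUnit hz)], grad_const]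
    rfl
  rw [partialMatrix_mul (differentiableAt_inv_apply hA hdet) hA] at hone
  rw [← mul_one (partialMatrix k (fun z ↦ (A z)⁻¹) y), ← mul_nonsing_inv _ hunit, ← mul_assoc,
    ← neg_eq_of_add_eq_zero_right hone, Matrix.neg_mul]

lemma grad_det_eq_det_mul_trace (hA : ∀ i j, DifferentiableAt ℝ (fun z ↦ A z i j) y)
    (hdet : (A y).det ≠ 0) (k : Fin (n + 1)) :
    grad (fun z ↦ (A z).det) y k = (A y).det * trace ((A y)⁻¹ * partialMatrix k A y) := by
  rw [grad_det_eq_trace_adjugate_mul hA, ← smul_eq_mul (A y).det, ← trace_smul, ← Matrix.smul_mul,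
    inv_def, smul_smul, Ring.mul_inverse_cancel _ hdet.isUnit, one_smul]

lemma sum_grad_det_mul_inv_eq_zero {A : Euc n → Matrix (Fin (n + 1)) (Fin (n + 1)) ℝ}
    (hA : ∀ i j, DifferentiableAt ℝ (fun z ↦ A z i j) y) (hdet : (A y).det ≠ 0)
    (hsymm : ∀ i j k, partialMatrix k A y i j = partialMatrix k A y j i)
    (hcodazzi : ∀ i j k, partialMatrix k A y i j = partialMatrix i A y k j) (i : Fin (n + 1)) :
    ∑ k, grad (fun z ↦ (A z).det * (A z)⁻¹ k i) y k = 0 := by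
  have hterm (k : Fin (n + 1)) : grad (fun z ↦ (A z).det * (A z)⁻¹ k i) y k = (A y).det *
      (trace ((A y)⁻¹ * partialMatrix k A y) * (A y)⁻¹ k i
        - ((A y)⁻¹ * partialMatrix k A y * (A y)⁻¹) k i) := by
    have hinv := congrFun (congrFun (partialMatrix_inv hA hdet k) k) i
    rw [partialMatrix, Matrix.of_apply, Matrix.neg_apply] at hinv
    rw [grad_mul (differentiableAt_det hA) (differentiableAt_inv_apply hA hdet k i), Pi.add_apply,
      Pi.smul_apply, Pi.smul_apply, hinv, grad_det_eq_det_mul_trace hA hdet, smul_eq_mul,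
      smul_eq_mul]
    ring
  simp only [hterm, ← Finset.mul_sum, Finset.sum_sub_distrib]
  suffices ∑ k, trace ((A y)⁻¹ * partialMatrix k A y) * (A y)⁻¹ k i =
      ∑ k, ((A y)⁻¹ * partialMatrix k A y * (A y)⁻¹) k i by rw [this, sub_self, mul_zero]
  simp only [trace, diag_apply, Matrix.mul_apply, Finset.sum_mul]
  rw [Finset.sum_comm]
  refine Finset.sum_congr rfl fun a _ ↦ Finset.sum_congr rfl fun k _ ↦
    Finset.sum_congr rfl fun b _ ↦ ?_
  rw [hcodazzi b a k, hsymm k a b, hcodazzi a k b]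

end MatrixCalculus

section SphereIntegral

variable {n : ℕ}

instance : IsFiniteMeasure (sphMeasure n) :=
  inferInstanceAs (IsFiniteMeasure (volume : Measure (Euc n)).toSphere)

instance : (sphMeasure n).IsOpenPosMeasure :=
  inferInstanceAs ((volume : Measure (Euc n)).toSphere.IsOpenPosMeasure)

lemma integral_eq_integral_sphere_integral_Ioi {f : Euc n → ℝ} (hf : Integrable f) :
    ∫ y, f y = ∫ x : sphere (0 : Euc n) 1, (∫ t in Set.Ioi (0 : ℝ), t ^ n * f (t • (x : Euc n)))
      ∂sphMeasure n := by
  have polar := (volume : Measure (Euc n)).measurePreserving_homeomorphUnitSphereProd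
  rw [show Module.finrank ℝ (Euc n) - 1 = n by simp] at polar
  let g : sphere (0 : Euc n) 1 × Set.Ioi (0 : ℝ) → ℝ := fun p ↦ f ((p.2 : ℝ) • (p.1 : Euc n))
  have hgf (y : ({0}ᶜ : Set (Euc n))) : g (homeomorphUnitSphereProd (Euc n) y) = f y := by
    have hy : ‖(y : Euc n)‖ ≠ 0 := norm_ne_zero_iff.2 y.2
    simp [g, smul_smul, mul_inv_cancel₀ hy]
  have hg : Integrable g ((sphMeasure n).prod (Measure.volumeIoiPow n)) := by
    rw [sphMeasure, ← polar.integrable_comp_emb (Homeomorph.measurableEmbedding _)]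
    exact ((integrableOn_iff_comap_subtypeVal (measurableSet_singleton 0).compl).1
      hf.integrableOn).congr (.of_forall fun y ↦ (hgf y).symm)
  calc ∫ y, f y
      = ∫ y : ({0}ᶜ : Set (Euc n)), f y ∂volume.comap Subtype.val := by
        rw [integral_subtype_comap (measurableSet_singleton _).compl f, restrict_compl_singleton]
    _ = ∫ p, g p ∂(sphMeasure n).prod (Measure.volumeIoiPow n) := by
        rw [sphMeasure, ← polar.integral_comp (Homeomorph.measurableEmbedding _)]
        simp_rw [hgf]
    _ = ∫ x, ∫ t, g (x, t) ∂Measure.volumeIoiPow n ∂sphMeasure n := integral_prod _ hg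
    _ = _ := by
        refine integral_congr_ae (.of_forall fun x ↦ ?_)
        simp only [Measure.volumeIoiPow, ENNReal.ofReal]
        rw [integral_withDensity_eq_integral_smul (by fun_prop), integral_subtype_comap
          measurableSet_Ioi fun t : ℝ ↦ Real.toNNReal (t ^ n) • f (t • (x : Euc n))]
        refine setIntegral_congr_fun measurableSet_Ioi fun t ht ↦ ?_
        simp only [NNReal.smul_def, Real.coe_toNNReal _ (pow_nonneg (le_of_lt ht) _), smul_eq_mul]

lemma eventuallyEq_zero_comp_norm {η : ℝ → ℝ} (hη0 : 0 ∉ tsupport η) :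
    (fun y : Euc n ↦ η ‖y‖) =ᶠ[nhds 0] fun _ ↦ 0 := by
  have hη : ∀ᶠ t in nhds ‖(0 : Euc n)‖, η t = 0 := by
    rw [norm_zero]
    exact notMem_tsupport_iff_eventuallyEq.1 hη0
  exact continuous_norm.continuousAt.eventually hη

lemma integrable_comp_norm_mul {η : ℝ → ℝ} {F : Euc n → ℝ} (hη : Continuous η)
    (hηc : HasCompactSupport η) (hη0 : 0 ∉ tsupport η) (hF : ContinuousOn F {0}ᶜ) :
    Integrable fun y ↦ η ‖y‖ * F y := by
  refine Continuous.integrable_of_hasCompactSupport ?_ ?_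
  · refine continuous_iff_continuousAt.2 fun y ↦ ?_
    rcases eq_or_ne y 0 with rfl | hy
    · refine (continuousAt_const (y := (0 : ℝ))).congr ?_
      filter_upwards [eventuallyEq_zero_comp_norm hη0] with y hy
      rw [hy, zero_mul]
    · exact (hη.comp continuous_norm).continuousAt.mul
        (hF.continuousAt (isOpen_compl_singleton.mem_nhds hy))
  · obtain ⟨R, hR⟩ := hηc.isCompact.isBounded.subset_closedBall 0
    refine HasCompactSupport.intro (isCompact_closedBall (0 : Euc n) R) fun y hy ↦ ?_
    have hη_norm : ‖y‖ ∉ tsupport η := fun h ↦ hy (by simpa using hR h)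
    rw [image_eq_zero_of_notMem_tsupport hη_norm, zero_mul]

lemma integral_comp_norm_mul {k : ℤ} {η : ℝ → ℝ} {F : Euc n → ℝ} (hη : Continuous η)
    (hηc : HasCompactSupport η) (hη0 : 0 ∉ tsupport η) (hF : SmoothHomog k F) :
    ∫ y, η ‖y‖ * F y =
      (∫ x : sphere (0 : Euc n) 1, F x ∂sphMeasure n) *
        ∫ t in Set.Ioi (0 : ℝ), t ^ n * (t ^ k * η t) := by
  rw [integral_eq_integral_sphere_integral_Ioi
    (integrable_comp_norm_mul hη hηc hη0 hF.contDiffOn.continuousOn), ← integral_mul_const]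
  refine integral_congr_ae (.of_forall fun x ↦ ?_)
  simp only [← integral_const_mul]
  refine setIntegral_congr_fun measurableSet_Ioi fun t (ht : 0 < t) ↦ ?_
  simp only [hF.map_smul t ht, norm_smul, Real.norm_of_nonneg ht.le, norm_eq_of_mem_sphere, mul_one]
  ring

lemma grad_comp_norm {ζ : ℝ → ℝ} (hζ : Differentiable ℝ ζ) (hζ0 : 0 ∉ tsupport ζ) (y : Euc n) :
    DifferentiableAt ℝ (fun z : Euc n ↦ ζ ‖z‖) y ∧
      grad (fun z ↦ ζ ‖z‖) y = (deriv ζ ‖y‖ * ‖y‖⁻¹) • ⇑y := by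
  rcases eq_or_ne y 0 with rfl | hy
  · have hzero := eventuallyEq_zero_comp_norm (n := n) hζ0
    refine ⟨hzero.differentiableAt_iff.2 (differentiableAt_const _), ?_⟩
    rw [grad_congr hzero fun _ h ↦ h, grad_const]
    simp
  · have hnorm := SmoothHomog.norm.differentiableAt hy
    refine ⟨(hζ _).comp y hnorm, ?_⟩
    rw [grad_comp (hζ _).hasDerivAt hnorm, grad_norm hy, smul_smul]

lemma exists_annular_cutoff : ∃ ζ : ℝ → ℝ, ContDiff ℝ 1 ζ ∧ HasCompactSupport ζ ∧
    tsupport ζ ⊆ Set.Ioi 0 ∧ (∀ t, 0 ≤ ζ t) ∧ ζ 2 = 1 := by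
  let ζ : ContDiffBump (2 : ℝ) := ⟨1 / 2, 1, by norm_num, by norm_num⟩
  refine ⟨ζ, ζ.contDiff, ζ.hasCompactSupport, fun t ht ↦ ?_, fun _ ↦ ζ.nonneg,
    ζ.one_of_mem_closedBall (by simp [ζ.rIn_pos.le])⟩
  rw [ζ.tsupport_eq, mem_closedBall, Real.dist_eq, abs_le] at ht
  simp only [ζ] at ht
  exact Set.mem_Ioi.2 (by linarith)

lemma integral_Ioi_pow_mul_zpow_mul_deriv {ζ : ℝ → ℝ} (hζ : ContDiff ℝ 1 ζ)
    (hζc : HasCompactSupport ζ) (hζpos : tsupport ζ ⊆ Set.Ioi 0) (n : ℕ) :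
    ∫ t in Set.Ioi (0 : ℝ), t ^ n * (t ^ (-n : ℤ) * deriv ζ t) = 0 := by
  have hcancel : Set.EqOn (fun t : ℝ ↦ t ^ n * (t ^ (-n : ℤ) * deriv ζ t)) (deriv ζ)
      (Set.Ioi 0) := fun t (ht : 0 < t) ↦ by
    simp only [_root_.zpow_neg, zpow_natCast]
    field_simp
  rw [setIntegral_congr_fun measurableSet_Ioi hcancel,
    hζc.integral_Ioi_deriv_eq hζ, neg_eq_zero]
  exact image_eq_zero_of_notMem_tsupport fun h ↦ lt_irrefl _ (Set.mem_Ioi.1 (hζpos h))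

lemma integral_Ioi_pow_mul_zpow_mul_pos {ζ : ℝ → ℝ} (hζ : Continuous ζ)
    (hζc : HasCompactSupport ζ) (hζpos : tsupport ζ ⊆ Set.Ioi 0) (hζ_nonneg : ∀ t, 0 ≤ ζ t)
    {t₀ : ℝ} (ht₀ : ζ t₀ ≠ 0) (n : ℕ) (k : ℤ) :
    0 < ∫ t in Set.Ioi (0 : ℝ), t ^ n * (t ^ k * ζ t) := by
  have hsupp {t : ℝ} (h : t ∉ tsupport ζ) : t ^ n * (t ^ k * ζ t) = 0 := by
    rw [image_eq_zero_of_notMem_tsupport h, mul_zero, mul_zero]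
  have ht₀pos : 0 < t₀ := hζpos (subset_tsupport ζ ht₀)
  rw [setIntegral_eq_integral_of_forall_compl_eq_zero fun t ht ↦ hsupp fun h ↦ ht (hζpos h)]
  refine Continuous.integral_pos_of_hasCompactSupport_nonneg_nonzero ?_
    (hζc.mono' fun t ht ↦ of_not_not fun h ↦ ht (hsupp h)) (fun t ↦ ?_)
    (mul_ne_zero (pow_ne_zero n ht₀pos.ne') (mul_ne_zero (zpow_ne_zero k ht₀pos.ne') ht₀))
  · refine continuous_iff_continuousAt.2 fun t ↦ ?_
    by_cases ht : t ∈ tsupport ζ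
    · exact (continuousAt_id.pow n).mul
        ((continuousAt_zpow₀ t k (.inl (hζpos ht).ne')).mul hζ.continuousAt)
    · refine (continuousAt_const (y := (0 : ℝ))).congr ?_
      filter_upwards [(isClosed_tsupport ζ).isOpen_compl.mem_nhds ht] with s hs
      exact (hsupp hs).symm
  · by_cases ht : t ∈ tsupport ζ
    · have : 0 < t := hζpos ht
      have := hζ_nonneg t
      positivity
    · exact (hsupp ht).ge

-- Integrate `∂ₖ (ζ(‖y‖) F y)`: the part where the derivative falls on the cutoff `ζ` is a multiple
-- of `∫ ζ' = 0`.
lemma integral_sphere_grad_eq_zero {F : Euc n → ℝ} (hF : SmoothHomog (-n) F) (k : Fin (n + 1)) :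
    ∫ x : sphere (0 : Euc n) 1, grad F x k ∂sphMeasure n = 0 := by
  obtain ⟨ζ, hζ, hζc, hζpos, hζ_nonneg, hζ_two⟩ := exists_annular_cutoff
  have hζ0 : (0 : ℝ) ∉ tsupport ζ := fun h ↦ lt_irrefl _ (Set.mem_Ioi.1 (hζpos h))
  have hdζ : Continuous (deriv ζ) := hζ.continuous_deriv le_rfl
  have hdζ0 : 0 ∉ tsupport (deriv ζ) := fun h ↦ hζ0 (tsupport_deriv_subset h)
  have hgrad := hF.grad_apply k
  have hG : SmoothHomog (-n) fun y ↦ ‖y‖⁻¹ * y k * F y :=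
    (((SmoothHomog.norm.inv fun y hy ↦ norm_ne_zero_iff.2 hy).mul (.coord k)).mul hF).of_eq
      (by ring)
  have hfderiv (y : Euc n) : fderiv ℝ (fun z ↦ ζ ‖z‖) y (EuclideanSpace.single k 1) * F y =
      deriv ζ ‖y‖ * (‖y‖⁻¹ * y k * F y) := by
    change grad (fun z ↦ ζ ‖z‖) y k * F y = _
    rw [(grad_comp_norm (hζ.differentiable one_ne_zero) hζ0 y).2, Pi.smul_apply, smul_eq_mul]
    ring
  have parts : ∫ y, ζ ‖y‖ * grad F y k = -∫ y, deriv ζ ‖y‖ * (‖y‖⁻¹ * y k * F y) := by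
    simp_rw [← hfderiv]
    refine integral_mul_fderiv_eq_neg_fderiv_mul_of_integrable ?_ ?_ ?_
      (fun y _ ↦ (grad_comp_norm (hζ.differentiable one_ne_zero) hζ0 y).1) fun y hy ↦ ?_
    · simp_rw [hfderiv]
      exact integrable_comp_norm_mul hdζ hζc.deriv hdζ0 hG.contDiffOn.continuousOn
    · exact integrable_comp_norm_mul hζ.continuous hζc hζ0 hgrad.contDiffOn.continuousOn
    · exact integrable_comp_norm_mul hζ.continuous hζc hζ0 hF.contDiffOn.continuousOn
    · refine hF.differentiableAt fun h ↦ ?_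
      rw [h] at hy
      exact notMem_tsupport_iff_eventuallyEq.2 (eventuallyEq_zero_comp_norm hζ0) hy
  rw [integral_comp_norm_mul hζ.continuous hζc hζ0 hgrad,
    integral_comp_norm_mul hdζ hζc.deriv hdζ0 hG, integral_Ioi_pow_mul_zpow_mul_deriv hζ hζc hζpos,
    mul_zero, neg_zero] at parts
  exact (mul_eq_zero.1 parts).resolve_right
    (integral_Ioi_pow_mul_zpow_mul_pos hζ.continuous hζc hζpos hζ_nonneg
      (hζ_two.trans_ne one_ne_zero) n _).ne'

lemma inv_norm_smul_mem_unit_sphere {y : Euc n} (hy : y ≠ 0) :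
    ‖y‖⁻¹ • y ∈ sphere (0 : Euc n) 1 := by
  simp [norm_smul, norm_ne_zero_iff.2 hy]

namespace SmoothHomog

variable {k : ℤ} {F H : Euc n → ℝ}

lemma continuous_sphere (hF : SmoothHomog k F) :
    Continuous fun x : sphere (0 : Euc n) 1 ↦ F x :=
  hF.contDiffOn.continuousOn.comp_continuous continuous_subtype_val fun x ↦
    ne_zero_of_mem_unit_sphere x

lemma apply_eq_norm_zpow_mul (hF : SmoothHomog k F) {y : Euc n} (hy : y ≠ 0) :
    F y = ‖y‖ ^ k * F (‖y‖⁻¹ • y) := by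
  rw [← hF.map_smul _ (norm_pos_iff.2 hy), smul_inv_smul₀ (norm_ne_zero_iff.2 hy)]

lemma exists_abs_le (hF : SmoothHomog k F) : ∃ C, 0 < C ∧ ∀ y ≠ 0, |F y| ≤ C * ‖y‖ ^ k := by
  obtain ⟨C, hC⟩ := isCompact_univ.exists_bound_of_continuousOn hF.continuous_sphere.continuousOn
  refine ⟨max C 1, by positivity, fun y hy ↦ ?_⟩
  have hbound : |F (‖y‖⁻¹ • y)| ≤ C := hC ⟨_, inv_norm_smul_mem_unit_sphere hy⟩ trivial
  rw [hF.apply_eq_norm_zpow_mul hy, abs_mul, abs_of_nonneg (by positivity), mul_comm]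
  gcongr
  exact hbound.trans (le_max_left _ _)

lemma exists_pos_le (hF : SmoothHomog k F) (hpos : ∀ y ≠ 0, 0 < F y) :
    ∃ c, 0 < c ∧ ∀ y ≠ 0, c * ‖y‖ ^ k ≤ F y := by
  have hne : (Set.univ : Set (sphere (0 : Euc n) 1)).Nonempty :=
    @Set.univ_nonempty _ (NormedSpace.sphere_nonempty.2 zero_le_one).to_subtype
  obtain ⟨x, -, hx⟩ := isCompact_univ.exists_isMinOn hne hF.continuous_sphere.continuousOn
  refine ⟨F x, hpos x (ne_zero_of_mem_unit_sphere x), fun y hy ↦ ?_⟩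
  rw [hF.apply_eq_norm_zpow_mul hy, mul_comm]
  gcongr
  exact hx (a := ⟨_, inv_norm_smul_mem_unit_sphere hy⟩) trivial

lemma map_zero (hF : SmoothHomog 1 F) : F 0 = 0 := by
  have := hF.map_smul 2 two_pos 0
  simp only [smul_zero, zpow_one] at this
  linarith

lemma continuous (hF : SmoothHomog 1 F) : Continuous F := by
  refine continuous_iff_continuousAt.2 fun y ↦ ?_
  rcases eq_or_ne y 0 with rfl | hy
  · obtain ⟨C, -, hC⟩ := hF.exists_abs_le
    have hbound (z : Euc n) : ‖F z‖ ≤ C * ‖z‖ := by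
      rcases eq_or_ne z 0 with rfl | hz
      · simp [hF.map_zero]
      · simpa using hC z hz
    rw [ContinuousAt, hF.map_zero]
    refine squeeze_zero_norm hbound ?_
    simpa using (tendsto_norm_zero (E := Euc n)).const_mul C
  · exact (hF.contDiffAt hy).continuousAt

lemma isCompact_sublevel (hH : SmoothHomog 1 H) (hpos : ∀ y ≠ 0, 0 < H y) (r : ℝ) :
    IsCompact {y | H y ≤ r} := by
  obtain ⟨c, hc, hle⟩ := hH.exists_pos_le hpos
  refine Metric.isCompact_of_isClosed_isBounded (isClosed_le hH.continuous continuous_const)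
    ((isBounded_closedBall (x := (0 : Euc n)) (r := max (c⁻¹ * r) 0)).subset fun y hy ↦ ?_)
  rcases eq_or_ne y 0 with rfl | hy0
  · simp
  · have : c * ‖y‖ ≤ r := by simpa using (hle y hy0).trans hy
    simpa using Or.inl ((le_inv_mul_iff₀ hc).2 this)

lemma volume_real_sublevel_one (hH : SmoothHomog 1 H) (hpos : ∀ y ≠ 0, 0 < H y) :
    volume.real {y | H y ≤ 1} =
      (∫ x : sphere (0 : Euc n) 1, (H x ^ (n + 1))⁻¹ ∂sphMeasure n) / (n + 1) := by
  have hcompact := hH.isCompact_sublevel hpos 1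
  rw [← integral_indicator_one hcompact.measurableSet, integral_eq_integral_sphere_integral_Ioi
    (IntegrableOn.integrable_indicator (f := 1) (integrableOn_const hcompact.measure_lt_top.ne)
      hcompact.measurableSet), ← integral_div]
  refine integral_congr_ae (.of_forall fun x ↦ ?_)
  have hx : 0 < H x := hpos x (ne_zero_of_mem_unit_sphere x)
  have hradial : Set.EqOn
      (fun t : ℝ ↦ t ^ n * {y | H y ≤ 1}.indicator (1 : Euc n → ℝ) (t • (x : Euc n)))
      ((Set.Iic (H x)⁻¹).indicator fun t ↦ t ^ n) (Set.Ioi 0) := fun t (ht : 0 < t) ↦ by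
    have hmem : H (t • (x : Euc n)) ≤ 1 ↔ t ≤ (H x)⁻¹ := by
      rw [hH.map_smul t ht, zpow_one, ← le_div_iff₀ hx, one_div]
    simp only [Set.indicator_apply, Set.mem_ofPred_eq, Set.mem_Iic, hmem, Pi.one_apply, mul_ite,
      mul_one, mul_zero]
  beta_reduce
  rw [setIntegral_congr_fun measurableSet_Ioi hradial, setIntegral_indicator measurableSet_Iic,
    Set.Ioi_inter_Iic, ← intervalIntegral.integral_of_le (inv_nonneg.2 hx.le), integral_pow]
  simp

end SmoothHomog

end SphereIntegral

section Gauge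

variable {n : ℕ}

namespace SmoothHomog

lemma prod {ι : Type*} {s : Finset ι} {f : ι → Euc n → ℝ} (hf : ∀ i ∈ s, SmoothHomog 0 (f i)) :
    SmoothHomog 0 fun y ↦ ∏ i ∈ s, f i y := by
  refine ⟨contDiffOn_prod fun i hi ↦ (hf i hi).contDiffOn, fun c hc y ↦ ?_⟩
  rw [zpow_zero, one_mul]
  refine Finset.prod_congr rfl fun i hi ↦ ?_
  rw [(hf i hi).map_smul c hc, zpow_zero, one_mul]

variable {ι : Type*} [Fintype ι]

lemma dotProduct {k l : ℤ} {u v : Euc n → ι → ℝ} (hu : ∀ i, SmoothHomog k fun y ↦ u y i)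
    (hv : ∀ i, SmoothHomog l fun y ↦ v y i) : SmoothHomog (k + l) fun y ↦ u y ⬝ᵥ v y := by
  simpa only [_root_.dotProduct] using .sum fun i _ ↦ (hu i).mul (hv i)

variable [DecidableEq ι] {A : Euc n → Matrix ι ι ℝ}

lemma det (hA : ∀ i j, SmoothHomog 0 fun y ↦ A y i j) : SmoothHomog 0 fun y ↦ (A y).det := by
  simp only [det_apply']
  exact .sum fun σ _ ↦ (SmoothHomog.prod fun i _ ↦ hA (σ i) i).const_mul _

lemma inv_matrix_apply (hA : ∀ i j, SmoothHomog 0 fun y ↦ A y i j) (hdet : ∀ y ≠ 0, (A y).det ≠ 0)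
    (i j : ι) : SmoothHomog 0 fun y ↦ (A y)⁻¹ i j := by
  simp only [inv_def, Matrix.smul_apply, adjugate_apply, Ring.inverse_eq_inv', smul_eq_mul]
  refine ((det hA).inv hdet).mul (.det fun k l ↦ ?_)
  by_cases hk : k = j
  · subst hk
    simpa only [updateRow_self] using .const _
  · simpa only [updateRow_ne hk] using hA k l

end SmoothHomog

/-- The Hessian of `H²/2`, a Riemannian metric off the origin when `H` is a smooth gauge. -/
def gaugeMetric (H : Euc n → ℝ) (y : Euc n) : Matrix (Fin (n + 1)) (Fin (n + 1)) ℝ :=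
  vecMulVec (grad H y) (grad H y) + H y • ehess n H y

/-- Squared norm of the differential of `F` in the metric dual to `gaugeMetric H`. -/
def gradEnergy (H F : Euc n → ℝ) (y : Euc n) : ℝ :=
  grad F y ⬝ᵥ (gaugeMetric H y)⁻¹ *ᵥ grad F y

/-- The cone-volume measure of the body `{H ≤ 1}` in radial parametrization, normalized so that the
total mass is `(n + 1)` times the volume of the body. -/
def gaugeMeasure (H : Euc n → ℝ) : Measure (sphere (0 : Euc n) 1) :=
  (sphMeasure n).withDensity fun x ↦ ENNReal.ofReal (H x ^ (n + 1))⁻¹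

namespace SmoothHomog

variable {H : Euc n → ℝ} {y : Euc n}

lemma mul_grad_apply (hH : SmoothHomog 1 H) (j : Fin (n + 1)) :
    SmoothHomog 1 fun y ↦ H y * grad H y j :=
  (hH.mul (hH.grad_apply j)).of_eq (by ring)

lemma gaugeMetric_eq_grad (hH : SmoothHomog 1 H) (hy : y ≠ 0) (i j : Fin (n + 1)) :
    gaugeMetric H y i j = grad (fun z ↦ H z * grad H z j) y i := by
  rw [grad_mul (hH.differentiableAt hy) ((hH.grad_apply j).differentiableAt hy)]
  simp only [gaugeMetric, Matrix.add_apply, vecMulVec_apply, Matrix.smul_apply, smul_eq_mul,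
    Pi.add_apply, Pi.smul_apply]
  rw [add_comm, mul_comm (grad H y i)]
  rfl

lemma gaugeMetric_apply (hH : SmoothHomog 1 H) (i j : Fin (n + 1)) :
    SmoothHomog 0 fun y ↦ gaugeMetric H y i j :=
  ((hH.grad_apply i).mul (hH.grad_apply j)).of_eq (by ring) |>.add
    ((hH.mul ((hH.grad_apply j).grad_apply i)).of_eq (by ring))

lemma det_gaugeMetric (hH : SmoothHomog 1 H) : SmoothHomog 0 fun y ↦ (gaugeMetric H y).det :=
  .det hH.gaugeMetric_apply

end SmoothHomog

/-- `H` is a (not necessarily symmetric) norm, smooth off the origin, with strongly convex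
square. -/
structure IsSmoothGauge (H : Euc n → ℝ) : Prop where
  smoothHomog : SmoothHomog 1 H
  pos : ∀ y ≠ 0, 0 < H y
  posDef : ∀ y ≠ 0, (gaugeMetric H y).PosDef

namespace IsSmoothGauge

variable {H F ψ : Euc n → ℝ} {y : Euc n}

lemma ne_zero (hH : IsSmoothGauge H) (hy : y ≠ 0) : H y ≠ 0 := (hH.pos y hy).ne'

lemma pos_sphere (hH : IsSmoothGauge H) (x : sphere (0 : Euc n) 1) : 0 < H x :=
  hH.pos x (ne_zero_of_mem_unit_sphere x)

lemma isSymm_gaugeMetric (hH : IsSmoothGauge H) (hy : y ≠ 0) : (gaugeMetric H y).IsSymm :=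
  isHermitian_iff_isSymm.1 (hH.posDef y hy).isHermitian

lemma det_pos (hH : IsSmoothGauge H) (hy : y ≠ 0) : 0 < (gaugeMetric H y).det :=
  (hH.posDef y hy).det_pos

lemma smoothHomog_inv (hH : IsSmoothGauge H) (i j : Fin (n + 1)) :
    SmoothHomog 0 fun y ↦ (gaugeMetric H y)⁻¹ i j :=
  .inv_matrix_apply hH.smoothHomog.gaugeMetric_apply (fun _ hy ↦ (hH.det_pos hy).ne') i j

lemma gaugeMetric_mulVec_self (hH : IsSmoothGauge H) (hy : y ≠ 0) :
    gaugeMetric H y *ᵥ y = H y • grad H y := by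
  ext j
  have euler := (hH.smoothHomog.mul_grad_apply j).dotProduct_grad hy
  rw [Int.cast_one, one_mul] at euler
  rw [← (hH.isSymm_gaugeMetric hy).eq, mulVec_transpose]
  simpa only [vecMul, dotProduct, hH.smoothHomog.gaugeMetric_eq_grad hy, Pi.smul_apply,
    smul_eq_mul] using euler

lemma inv_mulVec_grad (hH : IsSmoothGauge H) (hy : y ≠ 0) :
    (gaugeMetric H y)⁻¹ *ᵥ grad H y = (H y)⁻¹ • ⇑y := by
  have hunit := (hH.det_pos hy).ne'.isUnit
  rw [eq_inv_smul_iff₀ (hH.ne_zero hy), ← mulVec_smul, ← hH.gaugeMetric_mulVec_self hy,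
    mulVec_mulVec, nonsing_inv_mul _ hunit, one_mulVec]

lemma smoothHomog_inv_mulVec_grad (hH : IsSmoothGauge H) (hF : SmoothHomog 1 F)
    (i : Fin (n + 1)) : SmoothHomog 0 fun y ↦ ((gaugeMetric H y)⁻¹ *ᵥ grad F y) i :=
  (SmoothHomog.dotProduct (hH.smoothHomog_inv i) hF.grad_apply).of_eq (by ring)

lemma smoothHomog_gradEnergy (hH : IsSmoothGauge H) (hF : SmoothHomog 1 F) :
    SmoothHomog 0 (gradEnergy H F) :=
  (SmoothHomog.dotProduct hF.grad_apply (hH.smoothHomog_inv_mulVec_grad hF)).of_eq (by ring)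

lemma sum_grad_det_mul_inv (hH : IsSmoothGauge H) (hy : y ≠ 0) (i : Fin (n + 1)) :
    ∑ k, grad (fun z ↦ (gaugeMetric H z).det * (gaugeMetric H z)⁻¹ k i) y k = 0 := by
  have hsymm (i j k) :
      partialMatrix k (gaugeMetric H) y i j = partialMatrix k (gaugeMetric H) y j i :=
    congrFun (grad_congr (isOpen_compl_singleton.mem_nhds hy) fun z hz ↦
      (hH.isSymm_gaugeMetric hz).apply j i) k
  have hcodazzi (i j k) :
      partialMatrix k (gaugeMetric H) y i j = partialMatrix i (gaugeMetric H) y k j := by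
    have hpartial (k i) : partialMatrix k (gaugeMetric H) y i j =
        ehess n (fun z ↦ H z * grad H z j) y k i :=
      congrFun (grad_congr (isOpen_compl_singleton.mem_nhds hy) fun z hz ↦
        hH.smoothHomog.gaugeMetric_eq_grad hz i j) k
    rw [hpartial, hpartial, ((hH.smoothHomog.mul_grad_apply j).isSymm_ehess hy).apply]
  exact sum_grad_det_mul_inv_eq_zero
    (fun i j ↦ (hH.smoothHomog.gaugeMetric_apply i j).differentiableAt hy) (hH.det_pos hy).ne'
    hsymm hcodazzi i

lemma continuous_density (hH : IsSmoothGauge H) :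
    Continuous fun x : sphere (0 : Euc n) 1 ↦ (H x ^ (n + 1))⁻¹ :=
  (hH.smoothHomog.continuous_sphere.pow _).inv₀ fun x ↦ (pow_pos (hH.pos_sphere x) _).ne'

lemma integral_gaugeMeasure (hH : IsSmoothGauge H) (f : sphere (0 : Euc n) 1 → ℝ) :
    ∫ x, f x ∂gaugeMeasure H = ∫ x, (H x ^ (n + 1))⁻¹ * f x ∂sphMeasure n := by
  have hmeas := hH.continuous_density.measurable.ennreal_ofReal
  rw [gaugeMeasure, integral_withDensity_eq_integral_toReal_smul hmeas (by simp)]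
  refine integral_congr_ae (.of_forall fun x ↦ ?_)
  have := hH.pos_sphere x
  simp only [smul_eq_mul, ENNReal.toReal_ofReal (by positivity : 0 ≤ (H x ^ (n + 1))⁻¹)]

lemma isFiniteMeasure (hH : IsSmoothGauge H) : IsFiniteMeasure (gaugeMeasure H) :=
  isFiniteMeasure_withDensity_ofReal
    (hH.continuous_density.integrable_of_hasCompactSupport (.of_compactSpace _)).2

lemma integrable (hH : IsSmoothGauge H) {k : ℤ} (hF : SmoothHomog k F) :
    Integrable (fun x : sphere (0 : Euc n) 1 ↦ F x) (gaugeMeasure H) :=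
  have := hH.isFiniteMeasure
  hF.continuous_sphere.integrable_of_hasCompactSupport (.of_compactSpace _)

lemma isOpenPosMeasure (hH : IsSmoothGauge H) : (gaugeMeasure H).IsOpenPosMeasure :=
  (withDensity_absolutelyContinuous' hH.continuous_density.measurable.ennreal_ofReal.aemeasurable
    (.of_forall fun x ↦
      (ENNReal.ofReal_pos.2 (inv_pos.2 (pow_pos (hH.pos_sphere x) _))).ne')).isOpenPosMeasure

lemma grad_mul_inv_pow (hH : IsSmoothGauge H) (hψ : SmoothHomog 1 ψ) (hy : y ≠ 0) :
    grad (fun z ↦ ψ z * (H z ^ (n + 1))⁻¹) y =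
      (H y ^ (n + 1))⁻¹ • (grad ψ y - ((n + 1) * ψ y / H y) • grad H y) := by
  have hHy := hH.ne_zero hy
  have hinv : HasDerivAt (fun t : ℝ ↦ (t ^ (n + 1))⁻¹) (-((n + 1) * H y ^ n) / (H y ^ (n + 1)) ^ 2)
      (H y) := by
    simpa using (hasDerivAt_pow (n + 1) (H y)).fun_inv (pow_ne_zero _ hHy)
  have hdiff := hH.smoothHomog.differentiableAt hy
  rw [grad_mul (hψ.differentiableAt hy) (hinv.differentiableAt.fun_comp' y hdiff),
    grad_comp hinv hdiff]
  ext k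
  simp only [Pi.add_apply, Pi.smul_apply, Pi.sub_apply, smul_eq_mul]
  field_simp
  ring

lemma smoothHomog_cofactor (hH : IsSmoothGauge H) (k i : Fin (n + 1)) :
    SmoothHomog 0 fun z ↦ (gaugeMetric H z).det * (gaugeMetric H z)⁻¹ k i :=
  (hH.smoothHomog.det_gaugeMetric.mul (hH.smoothHomog_inv k i)).of_eq (by ring)

lemma smoothHomog_mul_inv_pow (hH : IsSmoothGauge H) (hψ : SmoothHomog 1 ψ) :
    SmoothHomog (-n) fun z ↦ ψ z * (H z ^ (n + 1))⁻¹ :=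
  (hψ.mul ((hH.smoothHomog.pow (n + 1)).inv fun y hy ↦ pow_ne_zero _ (hH.ne_zero hy))).of_eq
    (by push_cast; ring)

lemma sum_grad_cofactor_mul (hH : IsSmoothGauge H) (hψ : SmoothHomog 1 ψ) (hy : y ≠ 0)
    (i : Fin (n + 1)) :
    ∑ k, grad (fun z ↦
      (gaugeMetric H z).det * (gaugeMetric H z)⁻¹ k i * (ψ z * (H z ^ (n + 1))⁻¹)) y k =
      (H y ^ (n + 1))⁻¹ * ((gaugeMetric H y).det * ((gaugeMetric H y)⁻¹ *ᵥ grad ψ y) i -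
        (n + 1) * ((gaugeMetric H y).det * (ψ y * y i / H y ^ 2))) := by
  have hgrad (k) : grad (fun z ↦
      (gaugeMetric H z).det * (gaugeMetric H z)⁻¹ k i * (ψ z * (H z ^ (n + 1))⁻¹)) y k =
      (gaugeMetric H y).det * (H y ^ (n + 1))⁻¹ * ((gaugeMetric H y)⁻¹ i k * grad ψ y k) -
      (gaugeMetric H y).det * (H y ^ (n + 1))⁻¹ * ((n + 1) * ψ y / H y) *
        ((gaugeMetric H y)⁻¹ i k * grad H y k) +
      ψ y * (H y ^ (n + 1))⁻¹ *
        grad (fun z ↦ (gaugeMetric H z).det * (gaugeMetric H z)⁻¹ k i) y k := by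
    rw [grad_mul ((hH.smoothHomog_cofactor k i).differentiableAt hy)
      ((hH.smoothHomog_mul_inv_pow hψ).differentiableAt hy), hH.grad_mul_inv_pow hψ hy,
      ← (hH.isSymm_gaugeMetric hy).inv.apply i k]
    simp only [Pi.add_apply, Pi.smul_apply, Pi.sub_apply, smul_eq_mul]
    ring
  have hinv := congrFun (hH.inv_mulVec_grad hy) i
  simp only [mulVec, dotProduct, Pi.smul_apply, smul_eq_mul] at hinv
  simp only [hgrad, Finset.sum_add_distrib, Finset.sum_sub_distrib, ← Finset.mul_sum,
    hH.sum_grad_det_mul_inv hy, hinv, mulVec, dotProduct]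
  ring

lemma integral_det_mul_inv_mulVec_grad (hH : IsSmoothGauge H) (hψ : SmoothHomog 1 ψ)
    (i : Fin (n + 1)) :
    ∫ x : sphere (0 : Euc n) 1, (gaugeMetric H x).det * ((gaugeMetric H x)⁻¹ *ᵥ grad ψ x) i
      ∂gaugeMeasure H =
    (n + 1) * ∫ x : sphere (0 : Euc n) 1, (gaugeMetric H x).det * (ψ x * x.1 i / H x ^ 2)
      ∂gaugeMeasure H := by
  have hflux (k) := ((hH.smoothHomog_cofactor k i).mul (hH.smoothHomog_mul_inv_pow hψ)).of_eq
    (zero_add _)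
  have htotal : ∫ x : sphere (0 : Euc n) 1, ∑ k, grad (fun z ↦ (gaugeMetric H z).det *
      (gaugeMetric H z)⁻¹ k i * (ψ z * (H z ^ (n + 1))⁻¹)) x k ∂sphMeasure n = 0 := by
    rw [integral_finsetSum _ fun k _ ↦ ((hflux k).grad_apply k).continuous_sphere
      |>.integrable_of_hasCompactSupport (.of_compactSpace _)]
    exact Finset.sum_eq_zero fun k _ ↦ integral_sphere_grad_eq_zero (hflux k) k
  simp_rw [hH.sum_grad_cofactor_mul hψ (ne_zero_of_mem_unit_sphere _), ← hH.integral_gaugeMeasure]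
    at htotal
  have hright : SmoothHomog 0 fun y ↦ (gaugeMetric H y).det * (ψ y * y i / H y ^ 2) :=
    (hH.smoothHomog.det_gaugeMetric.mul ((hψ.mul (.coord i)).div (hH.smoothHomog.pow 2) fun y hy ↦
      pow_ne_zero _ (hH.ne_zero hy))).of_eq (by norm_num)
  rw [integral_sub
    (hH.integrable (hH.smoothHomog.det_gaugeMetric.mul (hH.smoothHomog_inv_mulVec_grad hψ i)))
    ((hH.integrable hright).const_mul _), integral_const_mul, sub_eq_zero] at htotal
  exact htotal

end IsSmoothGauge

end Gauge

section StrictConvexity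

variable {E : Type*} [NormedAddCommGroup E] [NormedSpace ℝ E] {f : E → ℝ} {p : E}

lemma hasFDerivAt_fderiv_apply (hf : ContDiffAt ℝ 2 f p) (v : E) :
    HasFDerivAt (fun z ↦ fderiv ℝ f z v) ((fderiv ℝ (fderiv ℝ f) p).flip v) p := by
  have hd : DifferentiableAt ℝ (fderiv ℝ f) p :=
    (hf.fderiv_right (m := 1) (by norm_num)).differentiableAt one_ne_zero
  simpa using hd.hasFDerivAt.clm_apply (hasFDerivAt_const v p)

lemma strictConvexOn_of_fderiv_fderiv_pos {s : Set E} (hs : Convex ℝ s)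
    (hf : ∀ x ∈ s, ContDiffAt ℝ 2 f x)
    (hpos : ∀ x ∈ s, ∀ v ≠ 0, 0 < fderiv ℝ (fderiv ℝ f) x v v) : StrictConvexOn ℝ s f := by
  refine ⟨hs, fun x hx y hy hxy a b ha hb hab ↦ ?_⟩
  let γ : ℝ → E := AffineMap.lineMap x y
  have hγ (r : ℝ) : HasDerivAt γ (y - x) r := AffineMap.hasDerivAt_lineMap
  have hmem : ∀ r ∈ Set.Icc (0 : ℝ) 1, γ r ∈ s := fun r hr ↦ hs.lineMap_mem hx hy hr
  have hderiv {r : ℝ} (h : DifferentiableAt ℝ f (γ r)) :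
      HasDerivAt (f ∘ γ) (fderiv ℝ f (γ r) (y - x)) r :=
    h.hasFDerivAt.comp_hasDerivAt r (hγ r)
  have hderiv2 : ∀ r ∈ Set.Icc (0 : ℝ) 1,
      deriv^[2] (f ∘ γ) r = fderiv ℝ (fderiv ℝ f) (γ r) (y - x) (y - x) := fun r hr ↦ by
    have hfr := hf _ (hmem r hr)
    have hnhds : ∀ᶠ z in nhds r, deriv (f ∘ γ) z = fderiv ℝ f (γ z) (y - x) :=
      ((hγ r).continuousAt.eventually (hfr.eventually (by simp))).mono fun z hz ↦
        (hderiv (hz.differentiableAt two_ne_zero)).deriv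
    exact (Filter.EventuallyEq.deriv_eq hnhds).trans
      ((hasFDerivAt_fderiv_apply hfr (y - x)).comp_hasDerivAt r (hγ r)).deriv
  have hconv : StrictConvexOn ℝ (Set.Icc 0 1) (f ∘ γ) := by
    refine strictConvexOn_of_deriv2_pos (convex_Icc 0 1) (fun r hr ↦ ?_) fun r hr ↦ ?_
    · exact (hderiv ((hf _ (hmem r hr)).differentiableAt two_ne_zero)).continuousAt
        |>.continuousWithinAt
    · rw [hderiv2 r (interior_subset hr)]
      exact hpos _ (hmem r (interior_subset hr)) _ (sub_ne_zero.2 hxy.symm)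
  have h := hconv.2 (by simp : (0 : ℝ) ∈ Set.Icc 0 1) (by simp : (1 : ℝ) ∈ Set.Icc 0 1)
    zero_ne_one ha hb hab
  have hγb : γ b = a • x + b • y := by
    simp only [γ, AffineMap.lineMap_apply_module, ← hab, add_sub_cancel_right]
  simpa [γ, hγb] using h

lemma exists_strictConvexOn_ball [FiniteDimensional ℝ E] (hf : ContDiffAt ℝ 2 f p)
    (hpos : ∀ v ≠ 0, 0 < fderiv ℝ (fderiv ℝ f) p v v) :
    ∃ δ > 0, StrictConvexOn ℝ (ball p δ) f := by
  have hcont : ContinuousAt (fderiv ℝ (fderiv ℝ f)) p :=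
    ((hf.fderiv_right (m := 1) (by norm_num)).fderiv_right (m := 0) (by norm_num)).continuousAt
  have hunit : ∀ᶠ z in nhds p, ∀ v ∈ sphere (0 : E) 1, 0 < fderiv ℝ (fderiv ℝ f) z v v := by
    refine (isCompact_sphere (0 : E) 1).eventually_forall_of_forall_eventually fun v hv ↦ ?_
    refine ContinuousAt.eventually_lt continuousAt_const ?_
      (hpos v (ne_of_mem_sphere hv one_ne_zero))
    exact ((hcont.comp continuousAt_fst).clm_apply continuousAt_snd).clm_apply continuousAt_snd
  obtain ⟨δ, hδ, hball⟩ := Metric.eventually_nhds_iff_ball.1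
    ((hf.eventually (by simp)).and hunit)
  refine ⟨δ, hδ, strictConvexOn_of_fderiv_fderiv_pos (convex_ball p δ)
    (fun x hx ↦ (hball x hx).1) fun x hx v hv ↦ ?_⟩
  have h := (hball x hx).2 (‖v‖⁻¹ • v) (by simp [norm_smul, hv])
  simp only [map_smul, _root_.smul_apply, smul_eq_mul] at h
  exact pos_of_mul_pos_right (pos_of_mul_pos_right h (by positivity)) (by positivity)

end StrictConvexity

section GaugeConvexity

section Perturbation

variable {E : Type*} [NormedAddCommGroup E] [NormedSpace ℝ E] {V F : E → ℝ} {x : E}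

lemma hasFDerivAt_comp_fst {f : E → ℝ} {L : E →L[ℝ] ℝ} {z : E × ℝ} (h : HasFDerivAt f L z.1) :
    HasFDerivAt (fun z : E × ℝ ↦ f z.1) (L ∘L .fst ℝ E ℝ) z :=
  h.comp z hasFDerivAt_fst

lemma contDiffAt_add_snd_mul {m : ℕ∞} (hV : ContDiffAt ℝ m V x) (hF : ContDiffAt ℝ m F x) (q : ℝ) :
    ContDiffAt ℝ m (fun z : E × ℝ ↦ V z.1 + z.2 * F z.1 + q / 2 * z.2 ^ 2) (x, 0) := 
  ((hV.comp (x, (0 : ℝ)) contDiffAt_fst).add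
    (contDiffAt_snd.mul (hF.comp (x, (0 : ℝ)) contDiffAt_fst))).add
    (contDiffAt_const.mul (contDiffAt_snd.pow 2))

lemma fderiv_add_snd_mul {z : E × ℝ} (hV : DifferentiableAt ℝ V z.1)
    (hF : DifferentiableAt ℝ F z.1) (q : ℝ) (v : E × ℝ) :
    fderiv ℝ (fun z : E × ℝ ↦ V z.1 + z.2 * F z.1 + q / 2 * z.2 ^ 2) z v =
      fderiv ℝ V z.1 v.1 + (z.2 * fderiv ℝ F z.1 v.1 + v.2 * F z.1) + q * v.2 * z.2 := by
  have hV' := hasFDerivAt_comp_fst hV.hasFDerivAt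
  have hF' := hasFDerivAt_comp_fst hF.hasFDerivAt
  have h := (hV'.fun_add (hasFDerivAt_snd.fun_mul hF')).fun_add
    ((hasFDerivAt_snd.pow 2).const_mul (q / 2))
  rw [h.fderiv]
  simp
  ring

lemma fderiv_fderiv_add_snd_mul (hV : ContDiffAt ℝ 2 V x) (hF : ContDiffAt ℝ 2 F x) (q : ℝ)
    (v : E × ℝ) :
    fderiv ℝ (fderiv ℝ fun z : E × ℝ ↦ V z.1 + z.2 * F z.1 + q / 2 * z.2 ^ 2) (x, 0) v v =
      fderiv ℝ (fderiv ℝ V) x v.1 v.1 + 2 * v.2 * fderiv ℝ F x v.1 + q * v.2 ^ 2 := by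
  have hnear : ∀ᶠ z : E × ℝ in nhds (x, 0),
      fderiv ℝ (fun z : E × ℝ ↦ V z.1 + z.2 * F z.1 + q / 2 * z.2 ^ 2) z v =
        fderiv ℝ V z.1 v.1 + (z.2 * fderiv ℝ F z.1 v.1 + v.2 * F z.1) + q * v.2 * z.2 := by
    filter_upwards [continuousAt_fst.eventually (hV.eventually (by simp)),
      continuousAt_fst.eventually (hF.eventually (by simp))] with z hVz hFz
    exact fderiv_add_snd_mul (hVz.differentiableAt two_ne_zero)
      (hFz.differentiableAt two_ne_zero) q v
  have hdV := hasFDerivAt_comp_fst (z := (x, 0)) (hasFDerivAt_fderiv_apply hV v.1)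
  have hF' := hasFDerivAt_comp_fst (z := (x, 0)) (hF.differentiableAt two_ne_zero).hasFDerivAt
  have hdF := hasFDerivAt_comp_fst (z := (x, 0)) (hasFDerivAt_fderiv_apply hF v.1)
  have hright := (hdV.fun_add ((hasFDerivAt_snd.fun_mul hdF).fun_add
    (hF'.const_mul v.2))).fun_add (hasFDerivAt_snd.const_mul (q * v.2))
  have h := (hasFDerivAt_fderiv_apply (contDiffAt_add_snd_mul hV hF q) v).unique
    (hright.congr_of_eventuallyEq hnear)
  refine (DFunLike.congr_fun h v).trans ?_
  simp
  ring

end Perturbation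

variable {n : ℕ}

namespace IsSmoothGauge

variable {H F : Euc n → ℝ} {x y : Euc n}

lemma contDiffAt_sq_div_two (hH : IsSmoothGauge H) (hy : y ≠ 0) :
    ContDiffAt ℝ 2 (fun z ↦ H z ^ 2 / 2) y :=
  (((hH.smoothHomog.contDiffAt hy).pow 2).div_const 2).of_le (by norm_cast)

lemma fderiv_fderiv_sq_div_two (hH : IsSmoothGauge H) (hy : y ≠ 0) (v : Euc n) :
    fderiv ℝ (fderiv ℝ fun z ↦ H z ^ 2 / 2) y v v = ⇑v ⬝ᵥ gaugeMetric H y *ᵥ ⇑v := by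
  have hnear : ∀ᶠ z in nhds y, fderiv ℝ (fun z ↦ H z ^ 2 / 2) z v =
      ∑ j, H z * grad H z j * v j := by
    filter_upwards [isOpen_ne.mem_nhds hy] with z hz
    have hd := hH.smoothHomog.differentiableAt hz
    rw [fderiv_eq_grad_dotProduct, grad_comp (φ := fun r ↦ r ^ 2 / 2) (φ' := H z)
      (by simpa using (hasDerivAt_pow 2 (H z)).div_const 2) hd]
    simp only [dotProduct, Pi.smul_apply, smul_eq_mul]
  have hd (j : Fin (n + 1)) := (hH.smoothHomog.mul_grad_apply j).differentiableAt hy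
  calc fderiv ℝ (fderiv ℝ fun z ↦ H z ^ 2 / 2) y v v
      = fderiv ℝ (fun z ↦ ∑ j, H z * grad H z j * v j) y v := by
        rw [← Filter.EventuallyEq.fderiv_eq hnear,
          (hasFDerivAt_fderiv_apply (hH.contDiffAt_sq_div_two hy) v).fderiv]
        rfl
    _ = ∑ j, v j * fderiv ℝ (fun z ↦ H z * grad H z j) y v := by
        rw [fderiv_fun_sum fun j _ ↦ (hd j).mul_const (v j)]
        simp only [fderiv_mul_const (hd _), _root_.sum_apply, _root_.smul_apply, smul_eq_mul]
    _ = ⇑v ⬝ᵥ gaugeMetric H y *ᵥ ⇑v := by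
        rw [← (hH.isSymm_gaugeMetric hy).eq, mulVec_transpose]
        simp only [fderiv_eq_grad_dotProduct, dotProduct, vecMul,
          hH.smoothHomog.gaugeMetric_eq_grad hy, mul_comm]

lemma quadraticForm_pos_of_gradEnergy_lt (hH : IsSmoothGauge H) (hy : y ≠ 0) {q : ℝ}
    (hq : gradEnergy H F y < q) {w : Fin (n + 1) → ℝ} {r : ℝ} (hwr : w ≠ 0 ∨ r ≠ 0) :
    0 < w ⬝ᵥ gaugeMetric H y *ᵥ w + 2 * r * (grad F y ⬝ᵥ w) + q * r ^ 2 := by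
  have hM := hH.posDef y hy
  set M := gaugeMetric H y
  set u := w + r • M⁻¹ *ᵥ grad F y with hu
  have hMu : M *ᵥ u = M *ᵥ w + r • grad F y := by
    rw [hu, mulVec_add, mulVec_smul, mulVec_mulVec, mul_nonsing_inv _ (hH.det_pos hy).ne'.isUnit,
      one_mulVec]
  have hsymm : (M⁻¹ *ᵥ grad F y) ⬝ᵥ M *ᵥ w = grad F y ⬝ᵥ w := by
    rw [dotProduct_mulVec, ← mulVec_transpose, hH.isSymm_gaugeMetric hy, mulVec_mulVec,
      mul_nonsing_inv _ (hH.det_pos hy).ne'.isUnit, one_mulVec]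
  have hsquare : w ⬝ᵥ M *ᵥ w + 2 * r * (grad F y ⬝ᵥ w) + q * r ^ 2 =
      u ⬝ᵥ M *ᵥ u + r ^ 2 * (q - gradEnergy H F y) := by
    rw [hMu, hu, gradEnergy]
    simp only [add_dotProduct, dotProduct_add, smul_dotProduct, dotProduct_smul, smul_eq_mul,
      hsymm, dotProduct_comm w (grad F y), dotProduct_comm (M⁻¹ *ᵥ grad F y) (grad F y)]
    ring
  rw [hsquare]
  obtain rfl | hr := eq_or_ne r 0
  · have hu0 : u ≠ 0 := by simpa [hu] using hwr
    simpa using hM.dotProduct_mulVec_pos hu0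
  · have hupos : 0 ≤ u ⬝ᵥ M *ᵥ u := by simpa using hM.posSemidef.dotProduct_mulVec_nonneg u
    have := sub_pos.2 hq
    positivity

end IsSmoothGauge

end GaugeConvexity

section GaugeMidpoint

lemma midpoint_lt_of_strictConvexOn {E : Type*} [AddCommGroup E] [Module ℝ E] {s : Set E}
    {f : E → ℝ} (hf : StrictConvexOn ℝ s f) {x y : E} (hx : x ∈ s) (hy : y ∈ s) (hxy : x ≠ y) :
    f (midpoint ℝ x y) < (f x + f y) / 2 := by
  have h := hf.2 hx hy hxy (by norm_num : (0 : ℝ) < 1 / 2) (by norm_num : (0 : ℝ) < 1 / 2)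
    (by norm_num)
  rw [← smul_add, ← smul_add, smul_eq_mul] at h
  rw [midpoint_eq_smul_add, invOf_eq_inv, ← one_div]
  linarith

lemma midpoint_le_of_strictConvexOn {E : Type*} [AddCommGroup E] [Module ℝ E] {s : Set E}
    {f : E → ℝ} (hf : StrictConvexOn ℝ s f) {x y : E} (hx : x ∈ s) (hy : y ∈ s) :
    f (midpoint ℝ x y) ≤ (f x + f y) / 2 := by
  obtain rfl | hxy := eq_or_ne x y
  · simp
  · exact (midpoint_lt_of_strictConvexOn hf hx hy hxy).le

variable {n : ℕ} {H F : Euc n → ℝ} {x y : Euc n}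

lemma SmoothHomog.map_smul_of_nonneg (hF : SmoothHomog 1 F) {c : ℝ} (hc : 0 ≤ c) (y : Euc n) :
    F (c • y) = c * F y := by
  obtain rfl | hc := hc.eq_or_lt
  · rw [zero_smul, zero_mul, hF.map_zero]
  · rw [hF.map_smul c hc, zpow_one]

namespace IsSmoothGauge

lemma nonneg (hH : IsSmoothGauge H) (y : Euc n) : 0 ≤ H y := by
  obtain rfl | hy := eq_or_ne y 0
  · exact hH.smoothHomog.map_zero.ge
  · exact (hH.pos y hy).le

lemma midpoint_lt_one_of_zero_mem_segment (hH : IsSmoothGauge H) (hx : H x ≤ 1) (hy : H y ≤ 1)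
    (h0 : 0 ∈ segment ℝ x y) : H (midpoint ℝ x y) < 1 := by
  obtain ⟨a, b, ha, hb, hab, h⟩ := h0
  wlog hle : a ≤ b generalizing x y a b
  · rw [midpoint_comm]
    exact this hy hx b a hb ha (add_comm b a ▸ hab) (add_comm (b • y) _ ▸ h) (le_of_not_ge hle)
  have hb0 : 0 < b := by linarith
  have hratio : a / b ≤ 1 := (div_le_one hb0).2 hle
  have hyx : y = -(a / b) • x := by
    rw [neg_smul, div_eq_inv_mul, mul_smul, ← smul_neg, eq_inv_smul_iff₀ hb0.ne']
    exact eq_neg_of_add_eq_zero_right h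
  have hmid : midpoint ℝ x y = ((1 - a / b) / 2) • x := by
    rw [midpoint_eq_smul_add, invOf_eq_inv, hyx]
    module
  have hratio0 : 0 ≤ a / b := by positivity
  rw [hmid, hH.smoothHomog.map_smul_of_nonneg (by linarith)]
  nlinarith [hH.nonneg x]

lemma midpoint_lt_one (hH : IsSmoothGauge H) (hxy : x ≠ y) (hx : H x ≤ 1) (hy : H y ≤ 1) :
    H (midpoint ℝ x y) < 1 := by
  by_cases h0 : 0 ∈ segment ℝ x y
  · exact hH.midpoint_lt_one_of_zero_mem_segment hx hy h0
  have hconv : StrictConvexOn ℝ (segment ℝ x y) fun z ↦ H z ^ 2 / 2 := by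
    have hne : ∀ z ∈ segment ℝ x y, z ≠ 0 := fun z hz h ↦ h0 (h ▸ hz)
    refine strictConvexOn_of_fderiv_fderiv_pos (convex_segment x y)
      (fun z hz ↦ hH.contDiffAt_sq_div_two (hne z hz)) fun z hz v hv ↦ ?_
    rw [hH.fderiv_fderiv_sq_div_two (hne z hz)]
    simpa using (hH.posDef z (hne z hz)).dotProduct_mulVec_pos
      ((WithLp.ofLp_eq_zero 2).not.2 hv)
  have hmid := midpoint_lt_of_strictConvexOn hconv (left_mem_segment ℝ x y)
    (right_mem_segment ℝ x y) hxy
  nlinarith [hH.nonneg x, hH.nonneg y]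

lemma eventually_sq_midpoint_le (hH : IsSmoothGauge H) (hF : SmoothHomog 1 F) (hx : x ≠ 0) {q : ℝ}
    (hq : gradEnergy H F x < q) :
    ∀ᶠ z : ℝ × Euc n × Euc n in nhds (0, x, x), H (midpoint ℝ z.2.1 z.2.2) ^ 2 ≤
      (H z.2.1 ^ 2 / 2 + z.1 * F z.2.1 + q / 2 * z.1 ^ 2) +
        (H z.2.2 ^ 2 / 2 - z.1 * F z.2.2 + q / 2 * z.1 ^ 2) := by
  have hV := hH.contDiffAt_sq_div_two hx
  have hF2 : ContDiffAt ℝ 2 F x := (hF.contDiffAt hx).of_le (by norm_cast)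
  obtain ⟨δ, hδ, hconv⟩ := exists_strictConvexOn_ball (contDiffAt_add_snd_mul hV hF2 q)
    fun v hv ↦ by
      rw [fderiv_fderiv_add_snd_mul hV hF2, hH.fderiv_fderiv_sq_div_two hx,
        fderiv_eq_grad_dotProduct]
      refine hH.quadraticForm_pos_of_gradEnergy_lt hx hq ?_
      contrapose! hv
      exact Prod.ext ((WithLp.ofLp_eq_zero 2).1 hv.1) hv.2
  have hleft : ∀ᶠ z : ℝ × Euc n × Euc n in nhds (0, x, x), (z.2.1, z.1) ∈ ball (x, (0 : ℝ)) δ :=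
    (show Continuous fun z : ℝ × Euc n × Euc n ↦ (z.2.1, z.1) by fun_prop).continuousAt
      (ball_mem_nhds _ hδ)
  have hright : ∀ᶠ z : ℝ × Euc n × Euc n in nhds (0, x, x), (z.2.2, -z.1) ∈ ball (x, (0 : ℝ)) δ :=
    (show Continuous fun z : ℝ × Euc n × Euc n ↦ (z.2.2, -z.1) by fun_prop).continuousAt
      (by simpa using ball_mem_nhds (x, (0 : ℝ)) hδ)
  filter_upwards [hleft, hright] with z hz1 hz2
  have h := midpoint_le_of_strictConvexOn hconv hz1 hz2
  have hsnd : (midpoint ℝ (z.2.1, z.1) (z.2.2, -z.1)).2 = 0 := by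
    simp [midpoint_eq_smul_add]
  have hfst : (midpoint ℝ (z.2.1, z.1) (z.2.2, -z.1)).1 = midpoint ℝ z.2.1 z.2.2 := by
    simp [midpoint_eq_smul_add]
  simp only [hfst, hsnd] at h
  nlinarith

end IsSmoothGauge

end GaugeMidpoint

section BrunnMinkowski

variable {n : ℕ}

lemma SmoothHomog.exists_forall_abs_le {f : Euc n → ℝ} (hf : SmoothHomog 0 f) :
    ∃ C, 0 < C ∧ ∀ y, |f y| ≤ C := by
  obtain ⟨C, hC, hfC⟩ := hf.exists_abs_le
  refine ⟨max C |f 0|, lt_max_of_lt_left hC, fun y ↦ ?_⟩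
  obtain rfl | hy := eq_or_ne y 0
  · exact le_max_right _ _
  · simpa using (hfC y hy).trans (le_max_left _ |f 0|)

/-- The `t ^ 2`-coefficient of `perturbRadius`. -/
def perturbCoeff (H F : Euc n → ℝ) (ε : ℝ) (y : Euc n) : ℝ :=
  ((F y / H y) ^ 2 - gradEnergy H F y - ε) / 2

/-- The expansion to order `t ^ 2` of the radial function, relative to `{H ≤ 1}`, of the sublevel
set of `H y ^ 2 / 2 + t * F y + t ^ 2 / 2 * gradEnergy H F y` at height `1 / 2`, lowered by
`ε * t ^ 2 / 2` to absorb the higher-order terms. The term in `gradEnergy H F` is the least one for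
which the Hessian of the defining function in `(y, t)` is nonnegative. -/
def perturbRadius (H F : Euc n → ℝ) (ε t : ℝ) (y : Euc n) : ℝ :=
  1 - t * (F y / H y) + t ^ 2 * perturbCoeff H F ε y

lemma tendsto_fst_snd_fst {X Y : Type*} [TopologicalSpace X] [TopologicalSpace Y] (x : X) (y : Y) :
    Filter.Tendsto (fun z : ℝ × X × Y ↦ (z.1, z.2.1)) (nhds (0, x, y)) (nhds (0, x)) :=
  (by fun_prop : Continuous fun z : ℝ × X × Y ↦ (z.1, z.2.1)).tendsto (0, x, y)

lemma tendsto_neg_fst_snd_snd {X Y : Type*} [TopologicalSpace X] [TopologicalSpace Y] (x : X)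
    (y : Y) :
    Filter.Tendsto (fun z : ℝ × X × Y ↦ (-z.1, z.2.2)) (nhds (0, x, y)) (nhds (0, y)) := by
  simpa using (by fun_prop : Continuous fun z : ℝ × X × Y ↦ (-z.1, z.2.2)).tendsto (0, x, y)

namespace IsSmoothGauge

variable {H F : Euc n → ℝ} {x y : Euc n} {ε : ℝ}

lemma smoothHomog_div (hH : IsSmoothGauge H) (hF : SmoothHomog 1 F) :
    SmoothHomog 0 fun y ↦ F y / H y :=
  hF.div hH.smoothHomog fun _ ↦ hH.ne_zero

lemma smoothHomog_perturbCoeff (hH : IsSmoothGauge H) (hF : SmoothHomog 1 F) (ε : ℝ) :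
    SmoothHomog 0 (perturbCoeff H F ε) := by
  have h := ((((hH.smoothHomog_div hF).pow 2).of_eq (zero_mul _)).add
    ((hH.smoothHomog_gradEnergy hF).const_mul (-1))).add (.const (-ε))
  convert h.const_mul (1 / 2) using 2
  rw [perturbCoeff]
  ring

lemma smoothHomog_perturbRadius (hH : IsSmoothGauge H) (hF : SmoothHomog 1 F) (ε t : ℝ) :
    SmoothHomog 0 (perturbRadius H F ε t) := by
  convert ((SmoothHomog.const 1).add ((hH.smoothHomog_div hF).const_mul (-t))).add
    ((hH.smoothHomog_perturbCoeff hF ε).const_mul (t ^ 2)) using 2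
  rw [perturbRadius]
  ring

lemma eventually_abs_perturbRadius_sub_one_lt (hH : IsSmoothGauge H) (hF : SmoothHomog 1 F)
    (ε : ℝ) {η : ℝ} (hη : 0 < η) :
    ∀ᶠ t in nhds 0, ∀ y, |perturbRadius H F ε t y - 1| < η := by
  obtain ⟨C, -, hfC⟩ := (hH.smoothHomog_div hF).exists_forall_abs_le
  obtain ⟨D, -, hgD⟩ := (hH.smoothHomog_perturbCoeff hF ε).exists_forall_abs_le
  have hlim : Filter.Tendsto (fun t : ℝ ↦ |t| * C + t ^ 2 * D) (nhds 0) (nhds 0) := by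
    have hcont : Continuous fun t : ℝ ↦ |t| * C + t ^ 2 * D := by fun_prop
    simpa using hcont.tendsto 0
  filter_upwards [hlim.eventually_lt_const hη] with t ht y
  refine lt_of_le_of_lt ?_ ht
  calc |perturbRadius H F ε t y - 1| = |-(t * (F y / H y)) + t ^ 2 * perturbCoeff H F ε y| := by
        rw [perturbRadius]; ring_nf
    _ ≤ |-(t * (F y / H y))| + |t ^ 2 * perturbCoeff H F ε y| := abs_add_le _ _
    _ = |t| * |F y / H y| + t ^ 2 * |perturbCoeff H F ε y| := by
        rw [abs_neg, abs_mul, abs_mul, abs_of_nonneg (sq_nonneg t)]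
    _ ≤ |t| * C + t ^ 2 * D := by gcongr <;> apply_assumption

lemma eventually_perturbRadius_lt (hH : IsSmoothGauge H) (hF : SmoothHomog 1 F) (ε : ℝ)
    (hx : 1 < H x) : ∀ᶠ z : ℝ × Euc n in nhds (0, x), perturbRadius H F ε z.1 z.2 < H z.2 := by
  obtain ⟨c, hc1, hcx⟩ := exists_between hx
  filter_upwards [continuousAt_fst.eventually
      (hH.eventually_abs_perturbRadius_sub_one_lt hF ε (sub_pos.2 hc1)),
    continuousAt_snd.eventually (hH.smoothHomog.continuous.continuousAt.eventually_const_lt hcx)]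
    with z hz1 hz2
  linarith [(abs_lt.1 (hz1 z.2)).2]

lemma eventually_sq_add_le_one_of_le_perturbRadius (hH : IsSmoothGauge H) (hF : SmoothHomog 1 F)
    (hx : x ≠ 0) {q : ℝ} (hq : q < gradEnergy H F x + ε) :
    ∀ᶠ z : ℝ × Euc n in nhds (0, x), H z.2 ≤ perturbRadius H F ε z.1 z.2 →
      H z.2 ^ 2 / 2 + z.1 * F z.2 + q / 2 * z.1 ^ 2 ≤ 1 / 2 := by
  have hcomp {f : Euc n → ℝ} {k : ℤ} (hf : SmoothHomog k f) :
      ContinuousAt (fun z : ℝ × Euc n ↦ f z.2) (0, x) :=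
    (hf.contDiffAt hx).continuousAt.comp continuousAt_snd
  have hpos : ∀ᶠ z : ℝ × Euc n in nhds (0, x), 0 < H z.2 + z.1 * (F z.2 / H z.2) :=
    continuousAt_const.eventually_lt ((hcomp hH.smoothHomog).add
      (continuousAt_fst.mul (hcomp (hH.smoothHomog_div hF)))) (by simpa using hH.pos x hx)
  have hslack : ∀ᶠ z : ℝ × Euc n in nhds (0, x),
      q + z.1 ^ 2 * perturbCoeff H F ε z.2 ^ 2 < gradEnergy H F z.2 + ε :=
    (continuousAt_const.add ((continuousAt_fst.pow 2).mul
      ((hcomp (hH.smoothHomog_perturbCoeff hF ε)).pow 2))).eventually_lt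
      ((hcomp (hH.smoothHomog_gradEnergy hF)).add continuousAt_const) (by simpa using hq)
  have hne : ∀ᶠ z : ℝ × Euc n in nhds (0, x), z.2 ≠ 0 := continuousAt_snd.eventually_ne hx
  filter_upwards [hpos, hslack, hne] with z hzpos hzslack hz0 hz
  set t := z.1
  have hFz : F z.2 = F z.2 / H z.2 * H z.2 := (div_mul_cancel₀ _ (hH.ne_zero hz0)).symm
  have hsq : (H z.2 + t * (F z.2 / H z.2)) ^ 2 ≤ (1 + t ^ 2 * perturbCoeff H F ε z.2) ^ 2 := by
    refine pow_le_pow_left₀ hzpos.le ?_ 2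
    rw [perturbRadius] at hz
    linarith
  have hcoeff : (F z.2 / H z.2) ^ 2 = 2 * perturbCoeff H F ε z.2 + gradEnergy H F z.2 + ε := by
    rw [perturbCoeff]
    ring
  rw [hFz]
  nlinarith [mul_le_mul_of_nonneg_left hzslack.le (sq_nonneg t), congrArg (t ^ 2 * ·) hcoeff]

lemma eventually_midpoint_le_one_nhds_diag (hH : IsSmoothGauge H) (hF : SmoothHomog 1 F)
    (hε : 0 < ε) (hx : x ≠ 0) :
    ∀ᶠ z : ℝ × Euc n × Euc n in nhds (0, x, x), H z.2.1 ≤ perturbRadius H F ε z.1 z.2.1 →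
      H z.2.2 ≤ perturbRadius H F ε (-z.1) z.2.2 → H (midpoint ℝ z.2.1 z.2.2) ≤ 1 := by
  have hsublevel := hH.eventually_sq_add_le_one_of_le_perturbRadius hF hx
    (show gradEnergy H F x + ε / 2 < gradEnergy H F x + ε by linarith)
  filter_upwards [hH.eventually_sq_midpoint_le hF hx
      (show gradEnergy H F x < gradEnergy H F x + ε / 2 by linarith),
    (tendsto_fst_snd_fst x x).eventually hsublevel,
    (tendsto_neg_fst_snd_snd x x).eventually hsublevel]
    with z hmid hleft hright hz1 hz2
  have h1 := hleft hz1
  have h2 := hright hz2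
  refine (sq_le_one_iff₀ (hH.nonneg _)).1 ?_
  linarith

lemma eventually_midpoint_le_one_nhds (hH : IsSmoothGauge H) (hF : SmoothHomog 1 F) (hε : 0 < ε)
    (x y : Euc n) :
    ∀ᶠ z : ℝ × Euc n × Euc n in nhds (0, x, y), H z.2.1 ≤ perturbRadius H F ε z.1 z.2.1 →
      H z.2.2 ≤ perturbRadius H F ε (-z.1) z.2.2 → H (midpoint ℝ z.2.1 z.2.2) ≤ 1 := by
  rcases lt_or_ge 1 (H x) with hx | hx
  · filter_upwards [(tendsto_fst_snd_fst x y).eventually (hH.eventually_perturbRadius_lt hF ε hx)]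
      with z hz hz1
    exact absurd hz1 hz.not_ge
  rcases lt_or_ge 1 (H y) with hy | hy
  · filter_upwards [(tendsto_neg_fst_snd_snd x y).eventually
      (hH.eventually_perturbRadius_lt hF ε hy)]
      with z hz _ hz2
    exact absurd hz2 hz.not_ge
  rcases lt_or_ge (H (midpoint ℝ x y)) 1 with hmid | hmid
  · have hcont : Continuous fun z : ℝ × Euc n × Euc n ↦ H (midpoint ℝ z.2.1 z.2.2) :=
      hH.smoothHomog.continuous.comp (by simp only [midpoint_eq_smul_add]; fun_prop)
    filter_upwards [hcont.continuousAt.eventually_lt_const hmid] with z hz _ _ using hz.le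
  · obtain rfl : x = y := by_contra fun hxy ↦ hmid.not_gt (hH.midpoint_lt_one hxy hx hy)
    refine hH.eventually_midpoint_le_one_nhds_diag hF hε ?_
    rintro rfl
    rw [midpoint_self, hH.smoothHomog.map_zero] at hmid
    exact hmid.not_gt one_pos

lemma eventually_forall_midpoint_le_one (hH : IsSmoothGauge H) (hF : SmoothHomog 1 F)
    (hε : 0 < ε) : ∀ᶠ t in nhds 0, ∀ x y, H x ≤ perturbRadius H F ε t x →
      H y ≤ perturbRadius H F ε (-t) y → H (midpoint ℝ x y) ≤ 1 := by
  have hcompact := hH.smoothHomog.isCompact_sublevel hH.pos 2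
  have hneg : Filter.Tendsto (fun t : ℝ ↦ -t) (nhds 0) (nhds 0) := by
    simpa using (continuous_neg (G := ℝ)).tendsto 0
  have hsmall := hH.eventually_abs_perturbRadius_sub_one_lt hF ε one_pos
  have hcompact_mid := (hcompact.prod hcompact).eventually_forall_of_forall_eventually
    (P := fun t z ↦ H z.1 ≤ perturbRadius H F ε t z.1 → H z.2 ≤ perturbRadius H F ε (-t) z.2 →
      H (midpoint ℝ z.1 z.2) ≤ 1)
    fun z _ ↦ hH.eventually_midpoint_le_one_nhds hF hε z.1 z.2
  filter_upwards [hcompact_mid, hsmall, hneg.eventually hsmall]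
    with t hmid ht hnegt x y hx hy
  have hx2 : H x ≤ 2 := by linarith [(abs_lt.1 (ht x)).2]
  have hy2 : H y ≤ 2 := by linarith [(abs_lt.1 (hnegt y)).2]
  exact hmid (x, y) ⟨hx2, hy2⟩ hx hy

lemma volume_real_le_perturbRadius (hH : IsSmoothGauge H) (hF : SmoothHomog 1 F) {t : ℝ}
    (hr : ∀ y, 0 < perturbRadius H F ε t y) :
    volume.real {y | H y ≤ perturbRadius H F ε t y} =
      (∫ x : sphere (0 : Euc n) 1, perturbRadius H F ε t x ^ (n + 1) ∂gaugeMeasure H) /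
        (n + 1) := by
  have hquot : SmoothHomog 1 fun y ↦ H y / perturbRadius H F ε t y :=
    hH.smoothHomog.div (hH.smoothHomog_perturbRadius hF ε t) fun y _ ↦ (hr y).ne'
  have hvol := hquot.volume_real_sublevel_one fun y hy ↦ div_pos (hH.pos y hy) (hr y)
  simp only [div_le_one (hr _)] at hvol
  rw [hvol, hH.integral_gaugeMeasure]
  simp only [div_pow, inv_div]
  simp only [div_eq_inv_mul]

lemma isCompact_le_perturbRadius (hH : IsSmoothGauge H) (hF : SmoothHomog 1 F) {t : ℝ}
    (hr : ∀ y, 0 < perturbRadius H F ε t y) :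
    IsCompact {y | H y ≤ perturbRadius H F ε t y} := by
  have hquot : SmoothHomog 1 fun y ↦ H y / perturbRadius H F ε t y :=
    hH.smoothHomog.div (hH.smoothHomog_perturbRadius hF ε t) fun y _ ↦ (hr y).ne'
  simpa only [div_le_one (hr _)] using
    hquot.isCompact_sublevel (fun y hy ↦ div_pos (hH.pos y hy) (hr y)) 1

lemma eventually_integral_perturbRadius_pow_mul_le (hH : IsSmoothGauge H) (hF : SmoothHomog 1 F)
    (hε : 0 < ε) : ∀ᶠ t in nhds 0,
      (∫ x : sphere (0 : Euc n) 1, perturbRadius H F ε t x ^ (n + 1) ∂gaugeMeasure H) *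
        (∫ x : sphere (0 : Euc n) 1, perturbRadius H F ε (-t) x ^ (n + 1) ∂gaugeMeasure H) ≤
      (gaugeMeasure H).real Set.univ ^ 2 := by
  have hneg : Filter.Tendsto (fun t : ℝ ↦ -t) (nhds 0) (nhds 0) := by
    simpa using (continuous_neg (G := ℝ)).tendsto 0
  have hpos : ∀ᶠ t in nhds 0, ∀ y, 0 < perturbRadius H F ε t y :=
    (hH.eventually_abs_perturbRadius_sub_one_lt hF ε one_pos).mono fun t ht y ↦ by
      linarith [(abs_lt.1 (ht y)).1]
  have hunit : volume.real {y | H y ≤ 1} = (gaugeMeasure H).real Set.univ / (n + 1) := by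
    have hone := hH.integral_gaugeMeasure fun _ ↦ 1
    simp only [integral_const, smul_eq_mul, mul_one] at hone
    rw [hH.smoothHomog.volume_real_sublevel_one hH.pos, hone]
  have hcompact := hH.smoothHomog.isCompact_sublevel hH.pos 1
  filter_upwards [hpos, hneg.eventually hpos, hH.eventually_forall_midpoint_le_one hF hε]
    with t ht hnegt hmid
  have hvol : volume.real {y | H y ≤ perturbRadius H F ε t y} *
      volume.real {y | H y ≤ perturbRadius H F ε (-t) y} ≤ volume.real {y | H y ≤ 1} ^ 2 := by
    simp only [Measure.real, ← ENNReal.toReal_mul, ← ENNReal.toReal_pow]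
    refine ENNReal.toReal_mono (ENNReal.pow_ne_top hcompact.measure_ne_top) ?_
    exact (MidpointPrekopaLeindler.euclideanSpace (n + 1)).measure_mul_le_sq
      (hH.isCompact_le_perturbRadius hF ht).measurableSet
      (hH.isCompact_le_perturbRadius hF hnegt).measurableSet hcompact.measurableSet
      fun x hx y hy ↦ hmid x y hx hy
  rw [hH.volume_real_le_perturbRadius hF ht, hH.volume_real_le_perturbRadius hF hnegt, hunit,
    div_mul_div_comm, div_pow, ← sq] at hvol
  exact (div_le_div_iff_of_pos_right (by positivity)).1 hvol

end IsSmoothGauge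

end BrunnMinkowski

section Poincare

lemma exists_continuous_pow_remainder (d : ℕ) : ∃ R : ℝ → ℝ → ℝ → ℝ,
    (Continuous fun z : ℝ × ℝ × ℝ ↦ R z.1 z.2.1 z.2.2) ∧ ∀ f g t : ℝ,
      (1 - t * f + t ^ 2 * g) ^ d =
        1 - t * (d * f) + t ^ 2 * (d * g + d * (d - 1) / 2 * f ^ 2) + t ^ 3 * R f g t := by
  induction d with
  | zero => exact ⟨fun _ _ _ ↦ 0, continuous_const, fun f g t ↦ by simp⟩
  | succ d ih =>
    obtain ⟨R, hR, h⟩ := ih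
    refine ⟨fun f g t ↦ (1 - t * f + t ^ 2 * g) * R f g t +
      (t * g - f) * (d * g + d * (d - 1) / 2 * f ^ 2) - d * f * g, by fun_prop, fun f g t ↦ ?_⟩
    rw [pow_succ, h]
    push_cast
    ring

lemma nonpos_of_mul_le_sq {m a b : ℝ} (hm : 0 < m) {Φ : ℝ → ℝ}
    (hΦ : ∀ t, |t| ≤ 1 → m + t ^ 2 * a - |t| ^ 3 * b ≤ Φ t)
    (hmul : ∀ᶠ t in nhds 0, Φ t * Φ (-t) ≤ m ^ 2) : a ≤ 0 := by
  have hle : ∀ᶠ t in nhdsWithin (0 : ℝ) (Set.Ioi 0), a ≤ t * b := by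
    filter_upwards [hmul.filter_mono nhdsWithin_le_nhds, Ioc_mem_nhdsGT one_pos] with t ht ht1
    by_contra! hlt
    have habs : |t| = t := abs_of_pos ht1.1
    have hgain : 0 < t ^ 2 * a - t ^ 3 * b := by nlinarith [pow_pos ht1.1 2]
    have hright := hΦ t (habs.trans_le ht1.2)
    have hleft := hΦ (-t) (by rw [abs_neg]; exact habs.trans_le ht1.2)
    rw [abs_neg, neg_sq, habs] at hleft
    rw [habs] at hright
    nlinarith
  have hlim : Filter.Tendsto (fun t : ℝ ↦ t * b) (nhdsWithin 0 (Set.Ioi 0)) (nhds 0) := by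
    simpa using ((continuous_mul_const b).tendsto 0).mono_left nhdsWithin_le_nhds
  exact ge_of_tendsto hlim hle

lemma integral_add_const_mul_add_const {α : Type*} [MeasurableSpace α] {μ : Measure α}
    [IsFiniteMeasure μ] {f g : α → ℝ} (hf : Integrable f μ) (hg : Integrable g μ) (a b : ℝ) :
    ∫ x, (f x + a * g x + b) ∂μ = (∫ x, f x ∂μ) + a * (∫ x, g x ∂μ) + b * μ.real Set.univ := by
  have hlinear : Integrable (fun x ↦ f x + a * g x) μ := hf.add (hg.const_mul a)
  rw [integral_add hlinear (integrable_const b), integral_add hf (hg.const_mul a),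
    integral_const_mul, integral_const, smul_eq_mul, mul_comm b]

variable {n : ℕ}

namespace IsSmoothGauge

variable {H F G : Euc n → ℝ} {ε : ℝ}

lemma measureReal_univ_pos (hH : IsSmoothGauge H) : 0 < (gaugeMeasure H).real Set.univ := by
  have := hH.isFiniteMeasure
  have := hH.isOpenPosMeasure
  have := (NormedSpace.sphere_nonempty (x := (0 : Euc n)) (r := 1)).2 zero_le_one |>.to_subtype
  exact ENNReal.toReal_pos (isOpen_univ.measure_ne_zero _ Set.univ_nonempty) (measure_ne_top _ _)

lemma smoothHomog_pow_coeff (hH : IsSmoothGauge H) (hF : SmoothHomog 1 F) (ε : ℝ) :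
    SmoothHomog 0 fun y ↦ (n + 1) * perturbCoeff H F ε y + (n + 1) * n / 2 * (F y / H y) ^ 2 :=
  ((hH.smoothHomog_perturbCoeff hF ε).const_mul _).add
    ((((hH.smoothHomog_div hF).pow 2).of_eq (zero_mul _)).const_mul _)

lemma exists_le_perturbRadius_pow (hH : IsSmoothGauge H) (hF : SmoothHomog 1 F) (ε : ℝ) :
    ∃ B, ∀ t, |t| ≤ 1 → ∀ y, 1 - t * ((n + 1) * (F y / H y)) +
      t ^ 2 * ((n + 1) * perturbCoeff H F ε y + (n + 1) * n / 2 * (F y / H y) ^ 2) - |t| ^ 3 * B ≤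
        perturbRadius H F ε t y ^ (n + 1) := by
  obtain ⟨C, -, hC⟩ := (hH.smoothHomog_div hF).exists_forall_abs_le
  obtain ⟨D, -, hD⟩ := (hH.smoothHomog_perturbCoeff hF ε).exists_forall_abs_le
  obtain ⟨R, hRcont, hR⟩ := exists_continuous_pow_remainder (n + 1)
  obtain ⟨B, hB⟩ := (isCompact_Icc (a := -C) (b := C)).prod
    ((isCompact_Icc (a := -D) (b := D)).prod (isCompact_Icc (a := (-1 : ℝ)) (b := 1)))
      |>.exists_bound_of_continuousOn hRcont.continuousOn
  refine ⟨B, fun t ht y ↦ ?_⟩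
  have hbound : |R (F y / H y) (perturbCoeff H F ε y) t| ≤ B :=
    hB (_, _, t) ⟨abs_le.1 (hC y), abs_le.1 (hD y), abs_le.1 ht⟩
  have hremainder : |t ^ 3 * R (F y / H y) (perturbCoeff H F ε y) t| ≤ |t| ^ 3 * B := by
    rw [abs_mul, abs_pow]
    gcongr
  rw [perturbRadius, hR]
  push_cast
  linarith [(abs_le.1 hremainder).1]

lemma exists_le_integral_perturbRadius_pow (hH : IsSmoothGauge H) (hF : SmoothHomog 1 F) (ε : ℝ)
    (hmean : ∫ x : sphere (0 : Euc n) 1, F x / H x ∂gaugeMeasure H = 0) :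
    ∃ b, ∀ t, |t| ≤ 1 → (gaugeMeasure H).real Set.univ +
        t ^ 2 * (∫ x : sphere (0 : Euc n) 1, ((n + 1) * perturbCoeff H F ε x +
          (n + 1) * n / 2 * (F x / H x) ^ 2) ∂gaugeMeasure H) - |t| ^ 3 * b ≤
      ∫ x : sphere (0 : Euc n) 1, perturbRadius H F ε t x ^ (n + 1) ∂gaugeMeasure H := by
  obtain ⟨B, hB⟩ := hH.exists_le_perturbRadius_pow hF ε
  have := hH.isFiniteMeasure
  refine ⟨(gaugeMeasure H).real Set.univ * B, fun t ht ↦ ?_⟩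
  have hlinear := (hH.integrable (hH.smoothHomog_div hF)).const_mul (-(t * (n + 1)))
  have hquad := (hH.integrable (hH.smoothHomog_pow_coeff hF ε)).const_mul (t ^ 2)
  have hconst : Integrable (fun _ : sphere (0 : Euc n) 1 ↦ 1 - |t| ^ 3 * B) (gaugeMeasure H) :=
    integrable_const _
  have hmono := integral_mono ((hconst.add hlinear).add hquad)
    (hH.integrable ((hH.smoothHomog_perturbRadius hF ε t).pow (n + 1))) fun x ↦ by
      refine le_trans (le_of_eq ?_) (hB t ht x)
      simp only [Pi.add_apply]
      ring
  rw [integral_add' (hconst.add hlinear) hquad, integral_add' hconst hlinear, integral_const,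
    integral_const_mul, integral_const_mul, hmean, smul_eq_mul] at hmono
  linarith

lemma integral_div_sq_le_integral_gradEnergy (hH : IsSmoothGauge H) (hF : SmoothHomog 1 F)
    (hmean : ∫ x : sphere (0 : Euc n) 1, F x / H x ∂gaugeMeasure H = 0) :
    (n + 1) * ∫ x : sphere (0 : Euc n) 1, (F x / H x) ^ 2 ∂gaugeMeasure H ≤
      ∫ x : sphere (0 : Euc n) 1, gradEnergy H F x ∂gaugeMeasure H := by
  have := hH.isFiniteMeasure
  set m := (gaugeMeasure H).real Set.univ
  have hm : 0 < m := hH.measureReal_univ_pos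
  have hsq := hH.integrable (((hH.smoothHomog_div hF).pow 2).of_eq (zero_mul _))
  have henergy := hH.integrable (hH.smoothHomog_gradEnergy hF)
  have hdiff : Integrable (fun x : sphere (0 : Euc n) 1 ↦
      (n + 1) * (F x / H x) ^ 2 - gradEnergy H F x) (gaugeMeasure H) :=
    (hsq.const_mul _).sub henergy
  have hslack : ∀ ε > 0, (n + 1) * ∫ x : sphere (0 : Euc n) 1, (F x / H x) ^ 2 ∂gaugeMeasure H ≤
      (∫ x : sphere (0 : Euc n) 1, gradEnergy H F x ∂gaugeMeasure H) + ε * m := fun ε hε ↦ by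
    obtain ⟨b, hb⟩ := hH.exists_le_integral_perturbRadius_pow hF ε hmean
    have hcoeff := nonpos_of_mul_le_sq hm hb
      (hH.eventually_integral_perturbRadius_pow_mul_le hF hε)
    have hrw (x : sphere (0 : Euc n) 1) : (n + 1) * perturbCoeff H F ε x +
        (n + 1) * n / 2 * (F x / H x) ^ 2 =
        ((n + 1) / 2 : ℝ) * ((n + 1) * (F x / H x) ^ 2 - gradEnergy H F x - ε) := by
      rw [perturbCoeff]
      ring
    simp only [hrw] at hcoeff
    rw [integral_const_mul, integral_sub hdiff (integrable_const ε),
      integral_sub (hsq.const_mul _) henergy, integral_const_mul, integral_const,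
      smul_eq_mul] at hcoeff
    have := nonpos_of_mul_nonpos_right hcoeff (by positivity)
    linarith
  refine le_of_forall_pos_le_add fun δ hδ ↦ ?_
  simpa only [div_mul_cancel₀ δ hm.ne'] using hslack (δ / m) (div_pos hδ hm)

lemma dotProduct_inv_mulVec_comm (hH : IsSmoothGauge H) {y : Euc n} (hy : y ≠ 0)
    (u v : Fin (n + 1) → ℝ) :
    u ⬝ᵥ (gaugeMetric H y)⁻¹ *ᵥ v = v ⬝ᵥ (gaugeMetric H y)⁻¹ *ᵥ u := by
  rw [dotProduct_mulVec, ← mulVec_transpose, (hH.isSymm_gaugeMetric hy).inv.eq, dotProduct_comm]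

lemma gradEnergy_add_const_mul (hH : IsSmoothGauge H) (hG : SmoothHomog 1 G) {y : Euc n}
    (hy : y ≠ 0) (c : ℝ) : gradEnergy H (fun z ↦ G z + c * H z) y =
      gradEnergy H G y + 2 * c * (G y / H y) + c ^ 2 := by
  have hgrad : grad (fun z ↦ G z + c * H z) y = grad G y + c • grad H y := by
    have hd := hH.smoothHomog.differentiableAt hy
    rw [grad_add (hG.differentiableAt hy) (hd.const_mul c),
      grad_mul (differentiableAt_const c) hd, grad_const, smul_zero, add_zero]
  have hcross : grad G y ⬝ᵥ (gaugeMetric H y)⁻¹ *ᵥ grad H y = G y / H y := by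
    rw [hH.inv_mulVec_grad hy, dotProduct_smul, dotProduct_comm, hG.dotProduct_grad hy]
    simp [div_eq_inv_mul]
  have hself : grad H y ⬝ᵥ (gaugeMetric H y)⁻¹ *ᵥ grad H y = 1 := by
    rw [hH.inv_mulVec_grad hy, dotProduct_smul, dotProduct_comm, hH.smoothHomog.dotProduct_grad hy]
    simp [hH.ne_zero hy]
  simp only [gradEnergy, hgrad, mulVec_add, mulVec_smul, add_dotProduct, dotProduct_add,
    smul_dotProduct, dotProduct_smul, hH.dotProduct_inv_mulVec_comm hy (grad H y) (grad G y),
    hcross, hself, smul_eq_mul]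
  ring

-- The linearized Brunn–Minkowski inequality of `{H ≤ 1}`.
lemma integral_div_sq_le (hH : IsSmoothGauge H) (hG : SmoothHomog 1 G) :
    (n + 1) * ∫ x : sphere (0 : Euc n) 1, (G x / H x) ^ 2 ∂gaugeMeasure H ≤
      (∫ x : sphere (0 : Euc n) 1, gradEnergy H G x ∂gaugeMeasure H) +
        n * (∫ x : sphere (0 : Euc n) 1, G x / H x ∂gaugeMeasure H) ^ 2 /
          (gaugeMeasure H).real Set.univ := by
  have := hH.isFiniteMeasure
  set m := (gaugeMeasure H).real Set.univ
  set e := ∫ x : sphere (0 : Euc n) 1, G x / H x ∂gaugeMeasure H with he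
  have hm : 0 < m := hH.measureReal_univ_pos
  have hdiv := hH.integrable (hH.smoothHomog_div hG)
  have hsq := hH.integrable (((hH.smoothHomog_div hG).pow 2).of_eq (zero_mul _))
  have henergy := hH.integrable (hH.smoothHomog_gradEnergy hG)
  set c := -(e / m) with hc
  have hshift (x : sphere (0 : Euc n) 1) : (G x + c * H x) / H x = G x / H x + c := by
    rw [add_div, mul_div_cancel_right₀ _ (hH.pos_sphere x).ne']
  have hmean : ∫ x : sphere (0 : Euc n) 1, (G x + c * H x) / H x ∂gaugeMeasure H = 0 := by
    simp only [hshift]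
    rw [integral_add hdiv (integrable_const c), integral_const, smul_eq_mul, ← he, hc]
    field_simp
    ring
  have h := hH.integral_div_sq_le_integral_gradEnergy
    (hG.add (hH.smoothHomog.const_mul c)) hmean
  have hexpand (x : sphere (0 : Euc n) 1) : (G x / H x + c) ^ 2 =
      (G x / H x) ^ 2 + 2 * c * (G x / H x) + c ^ 2 := by ring
  simp only [hshift, hexpand, hH.gradEnergy_add_const_mul hG (ne_zero_of_mem_unit_sphere _),
    integral_add_const_mul_add_const hsq hdiv, integral_add_const_mul_add_const henergy hdiv]
    at h
  have hce : 2 * c * e + c ^ 2 * m = -(e ^ 2 / m) := by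
    rw [hc]
    field_simp
    ring
  rw [mul_div_assoc]
  nlinarith

end IsSmoothGauge

end Poincare

section SolutionIdentities

variable {n : ℕ}

/-- The squared Euclidean norm of the gradient of `H`. -/
def gradNormSq (H : Euc n → ℝ) (y : Euc n) : ℝ := grad H y ⬝ᵥ grad H y

/-- The homogeneous extension of degree `0` of `h ^ b`, where `h` is the restriction of `H` to the
unit sphere. -/
def radialWeight (H : Euc n → ℝ) (b : ℝ) (y : Euc n) : ℝ := (H y / ‖y‖) ^ b

/-- The gradient of `log (H / ‖·‖)`. -/
def logSlope (H : Euc n → ℝ) (y : Euc n) : Fin (n + 1) → ℝ :=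
  (H y)⁻¹ • grad H y - (‖y‖ ^ 2)⁻¹ • ⇑y

/-- The dual `gaugeMetric H`-energy of `logSlope H`, scaled to be homogeneous of degree `0`. -/
def slopeEnergy (H : Euc n → ℝ) (y : Euc n) : ℝ :=
  ‖y‖ ^ 2 * (logSlope H y ⬝ᵥ (gaugeMetric H y)⁻¹ *ᵥ logSlope H y)

/-- The weighted difference between the boundary point `y / H y` of `{H ≤ 1}` and the inversion of
`grad H y` in the unit sphere; it vanishes identically exactly when the body is a centered ball. -/
def inversionDefect (H : Euc n → ℝ) (b : ℝ) (y : Euc n) : Fin (n + 1) → ℝ :=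
  radialWeight H b y • ((H y)⁻¹ • ⇑y - (gradNormSq H y)⁻¹ • grad H y)

/-- The isotropic dual Minkowski equation for a smooth gauge `H`, in its form homogeneous of degree
`0`, with `a = n + 1 - q` and `b = n + 1 + p` in terms of the exponents `p` and `q`. -/
structure IsDualMinkowskiGauge (a b : ℝ) (H : Euc n → ℝ) : Prop extends IsSmoothGauge H where
  det_eq : ∀ y ≠ 0, (gaugeMetric H y).det = gradNormSq H y ^ (a / 2) * radialWeight H b y

namespace IsSmoothGauge

variable {H f : Euc n → ℝ} {y : Euc n}

lemma dotProduct_grad_self (hH : IsSmoothGauge H) (hy : y ≠ 0) : ⇑y ⬝ᵥ grad H y = H y := by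
  rw [hH.smoothHomog.dotProduct_grad hy, Int.cast_one, one_mul]

lemma gradNormSq_pos (hH : IsSmoothGauge H) (hy : y ≠ 0) : 0 < gradNormSq H y := by
  refine (dotProduct_self_star_nonneg _).lt_of_ne' fun h ↦ hH.ne_zero hy ?_
  rw [← hH.dotProduct_grad_self hy, dotProduct_self_eq_zero.1 h, dotProduct_zero]

lemma smoothHomog_gradNormSq (hH : IsSmoothGauge H) : SmoothHomog 0 (gradNormSq H) :=
  (SmoothHomog.dotProduct hH.smoothHomog.grad_apply hH.smoothHomog.grad_apply).of_eq (by ring)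

lemma div_norm_pos (hH : IsSmoothGauge H) (hy : y ≠ 0) : 0 < H y / ‖y‖ :=
  div_pos (hH.pos y hy) (norm_pos_iff.2 hy)

lemma smoothHomog_div_norm (hH : IsSmoothGauge H) : SmoothHomog 0 fun y ↦ H y / ‖y‖ :=
  hH.smoothHomog.div .norm fun _ ↦ norm_ne_zero_iff.2

lemma radialWeight_pos (hH : IsSmoothGauge H) (hy : y ≠ 0) (b : ℝ) : 0 < radialWeight H b y :=
  Real.rpow_pos_of_pos (hH.div_norm_pos hy) b

lemma smoothHomog_radialWeight (hH : IsSmoothGauge H) (b : ℝ) :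
    SmoothHomog 0 (radialWeight H b) :=
  hH.smoothHomog_div_norm.rpow (fun _ hy ↦ (hH.div_norm_pos hy).ne') b

lemma smoothHomog_radialWeight_mul_coord (hH : IsSmoothGauge H) (b : ℝ) (i : Fin (n + 1)) :
    SmoothHomog 1 fun y ↦ radialWeight H b y * y i :=
  ((hH.smoothHomog_radialWeight b).mul (.coord i)).of_eq (zero_add 1)

lemma smoothHomog_inversionDefect (hH : IsSmoothGauge H) (b : ℝ) (i : Fin (n + 1)) :
    SmoothHomog 0 fun y ↦ inversionDefect H b y i := by
  have hradial := (hH.smoothHomog.inv fun y hy ↦ hH.ne_zero hy).mul (.coord i)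
  have hinverted := (hH.smoothHomog_gradNormSq.inv fun y hy ↦ (hH.gradNormSq_pos hy).ne').mul
    (hH.smoothHomog.grad_apply i)
  simpa [inversionDefect, sub_eq_add_neg] using
    (hH.smoothHomog_radialWeight b).mul (hradial.add (hinverted.const_mul (-1)))

lemma grad_div_norm (hH : IsSmoothGauge H) (hy : y ≠ 0) :
    grad (fun z ↦ H z / ‖z‖) y = (H y / ‖y‖) • logSlope H y := by
  have hHy := hH.ne_zero hy
  have hny := norm_ne_zero_iff.2 hy
  have hnorm : DifferentiableAt ℝ (fun z : Euc n ↦ ‖z‖) y := SmoothHomog.norm.differentiableAt hy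
  simp only [div_eq_mul_inv]
  rw [grad_mul (hH.smoothHomog.differentiableAt hy) (hnorm.fun_inv hny),
    grad_comp (hasDerivAt_inv hny) hnorm, grad_norm hy]
  ext i
  simp only [logSlope, Pi.add_apply, Pi.sub_apply, Pi.smul_apply, smul_eq_mul]
  field_simp
  ring

lemma grad_radialWeight (hH : IsSmoothGauge H) (hy : y ≠ 0) (b : ℝ) :
    grad (radialWeight H b) y = (b * radialWeight H b y) • logSlope H y := by
  have hpos := hH.div_norm_pos hy
  unfold radialWeight
  rw [grad_rpow (hH.smoothHomog_div_norm.differentiableAt hy) hpos, hH.grad_div_norm hy, smul_smul,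
    div_mul_cancel₀ _ hpos.ne']

lemma grad_radialWeight_mul_coord (hH : IsSmoothGauge H) (hy : y ≠ 0) (b : ℝ) (i : Fin (n + 1)) :
    grad (fun z ↦ radialWeight H b z * z i) y =
      radialWeight H b y • ((b * y i) • logSlope H y + Pi.single i 1) := by
  rw [grad_mul ((hH.smoothHomog_radialWeight b).differentiableAt hy)
    ((SmoothHomog.coord i).differentiableAt hy), hH.grad_radialWeight hy, grad_coord]
  module

lemma dotProduct_logSlope (hH : IsSmoothGauge H) (hy : y ≠ 0) : ⇑y ⬝ᵥ logSlope H y = 0 := by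
  have hny : ‖y‖ ^ 2 ≠ 0 := pow_ne_zero 2 (norm_ne_zero_iff.2 hy)
  simp [logSlope, dotProduct_sub, dotProduct_smul, hH.dotProduct_grad_self hy,
    dotProduct_self_eq_norm_sq, hH.ne_zero hy, hny]

lemma dotProduct_inv_mulVec_logSlope (hH : IsSmoothGauge H) (hy : y ≠ 0) :
    ⇑y ⬝ᵥ (gaugeMetric H y)⁻¹ *ᵥ logSlope H y = -slopeEnergy H y := by
  have hny : ‖y‖ ^ 2 ≠ 0 := pow_ne_zero 2 (norm_ne_zero_iff.2 hy)
  have hgrad : grad H y ⬝ᵥ (gaugeMetric H y)⁻¹ *ᵥ logSlope H y = 0 := by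
    rw [hH.dotProduct_inv_mulVec_comm hy, hH.inv_mulVec_grad hy, dotProduct_smul, dotProduct_comm,
      hH.dotProduct_logSlope hy, smul_zero]
  have hexpand : logSlope H y ⬝ᵥ (gaugeMetric H y)⁻¹ *ᵥ logSlope H y =
      -((‖y‖ ^ 2)⁻¹ * (⇑y ⬝ᵥ (gaugeMetric H y)⁻¹ *ᵥ logSlope H y)) := by
    conv_lhs => enter [1]; rw [logSlope]
    rw [sub_dotProduct, smul_dotProduct, smul_dotProduct, hgrad, smul_zero, zero_sub, smul_eq_mul]
  rw [slopeEnergy, hexpand, mul_neg, neg_neg, mul_inv_cancel_left₀ hny]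

lemma slopeEnergy_nonneg (hH : IsSmoothGauge H) (hy : y ≠ 0) : 0 ≤ slopeEnergy H y :=
  mul_nonneg (sq_nonneg _) <| by
    simpa using (hH.posDef y hy).inv.posSemidef.dotProduct_mulVec_nonneg (logSlope H y)

lemma sum_inv_mulVec_grad_radialWeight_mul_coord (hH : IsSmoothGauge H) (hy : y ≠ 0) (b : ℝ) :
    ∑ i, ((gaugeMetric H y)⁻¹ *ᵥ grad (fun z ↦ radialWeight H b z * z i) y) i =
      radialWeight H b y * (-b * slopeEnergy H y + trace (gaugeMetric H y)⁻¹) := by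
  have hterm (i) : ((gaugeMetric H y)⁻¹ *ᵥ grad (fun z ↦ radialWeight H b z * z i) y) i =
      radialWeight H b y * (b * (y i * ((gaugeMetric H y)⁻¹ *ᵥ logSlope H y) i) +
        (gaugeMetric H y)⁻¹.diag i) := by
    rw [hH.grad_radialWeight_mul_coord hy]
    simp [mulVec_smul, mulVec_add, mul_add, mul_assoc]
  simp only [hterm, ← Finset.mul_sum, Finset.sum_add_distrib]
  rw [show ∑ i, y i * ((gaugeMetric H y)⁻¹ *ᵥ logSlope H y) i = -slopeEnergy H y from
    hH.dotProduct_inv_mulVec_logSlope hy, trace]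
  ring

lemma sum_gradEnergy_radialWeight_mul_coord (hH : IsSmoothGauge H) (hy : y ≠ 0) (b : ℝ) :
    ∑ i, gradEnergy H (fun z ↦ radialWeight H b z * z i) y = radialWeight H b y ^ 2 *
      ((b ^ 2 - 2 * b) * slopeEnergy H y + trace (gaugeMetric H y)⁻¹) := by
  have hterm (i) : gradEnergy H (fun z ↦ radialWeight H b z * z i) y = radialWeight H b y ^ 2 *
      (b ^ 2 * (logSlope H y ⬝ᵥ (gaugeMetric H y)⁻¹ *ᵥ logSlope H y) * y i ^ 2 +
        2 * b * (y i * ((gaugeMetric H y)⁻¹ *ᵥ logSlope H y) i) + (gaugeMetric H y)⁻¹.diag i) := by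
    rw [gradEnergy, hH.grad_radialWeight_mul_coord hy]
    simp only [mulVec_smul, mulVec_add, dotProduct_add, add_dotProduct, smul_dotProduct,
      dotProduct_smul, smul_eq_mul,
      hH.dotProduct_inv_mulVec_comm hy (logSlope H y) (Pi.single i 1)]
    simp only [single_one_dotProduct, mulVec_single_one, col_apply, diag_apply]
    ring
  simp only [hterm, ← Finset.mul_sum, Finset.sum_add_distrib, ← EuclideanSpace.real_norm_sq_eq]
  rw [show ∑ i, y i * ((gaugeMetric H y)⁻¹ *ᵥ logSlope H y) i = -slopeEnergy H y from
    hH.dotProduct_inv_mulVec_logSlope hy, slopeEnergy, trace]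
  ring

lemma grad_gradNormSq (hH : IsSmoothGauge H) (hy : y ≠ 0) :
    H y • grad (gradNormSq H) y =
      (2 : ℝ) • (gaugeMetric H y *ᵥ grad H y - gradNormSq H y • grad H y) := by
  have hdiff (j) := (hH.smoothHomog.grad_apply j).differentiableAt hy
  have hgrad : grad (gradNormSq H) y = (2 : ℝ) • (ehess n H y *ᵥ grad H y) := by
    unfold gradNormSq dotProduct
    rw [grad_sum fun j _ ↦ (hdiff j).fun_mul (hdiff j)]
    ext i
    simp only [grad_mul (hdiff _) (hdiff _), Finset.sum_apply, Pi.add_apply, Pi.smul_apply,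
      smul_eq_mul, mulVec, dotProduct, Finset.mul_sum]
    refine Finset.sum_congr rfl fun j _ ↦ ?_
    change _ = 2 * (grad (fun z ↦ grad H z j) y i * grad H y j)
    ring
  rw [hgrad, gaugeMetric, add_mulVec, smul_mulVec, vecMulVec_mulVec]
  ext i
  simp only [Pi.smul_apply, smul_eq_mul, op_smul_eq_smul, gradNormSq, add_sub_cancel_left]
  ring

lemma inv_mulVec_grad_gradNormSq (hH : IsSmoothGauge H) (hy : y ≠ 0) :
    (gaugeMetric H y)⁻¹ *ᵥ grad (gradNormSq H) y =
      (2 / H y) • (grad H y - (gradNormSq H y / H y) • ⇑y) := by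
  have hHy := hH.ne_zero hy
  have hcancel : (gaugeMetric H y)⁻¹ *ᵥ (gaugeMetric H y *ᵥ grad H y) = grad H y := by
    rw [mulVec_mulVec, nonsing_inv_mul _ (hH.det_pos hy).ne'.isUnit, one_mulVec]
  have h := congrArg ((gaugeMetric H y)⁻¹ *ᵥ ·) (hH.grad_gradNormSq hy)
  simp only [mulVec_smul, mulVec_sub, hcancel, hH.inv_mulVec_grad hy] at h
  rw [(eq_inv_smul_iff₀ hHy).2 h]
  ext i
  simp only [Pi.smul_apply, Pi.sub_apply, smul_eq_mul]
  field_simp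

lemma grad_dotProduct_inversionDefect (hH : IsSmoothGauge H) (hy : y ≠ 0) (b : ℝ) :
    grad H y ⬝ᵥ inversionDefect H b y = 0 := by
  have hself : grad H y ⬝ᵥ grad H y ≠ 0 := (hH.gradNormSq_pos hy).ne'
  simp [inversionDefect, dotProduct_smul, dotProduct_sub, dotProduct_comm _ ⇑y,
    hH.dotProduct_grad_self hy, hH.ne_zero hy, gradNormSq, hself]

lemma inversionDefect_dotProduct_self (hH : IsSmoothGauge H) (hy : y ≠ 0) (b : ℝ) :
    inversionDefect H b y ⬝ᵥ inversionDefect H b y =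
      radialWeight H b y / H y * (⇑y ⬝ᵥ inversionDefect H b y) := by
  conv_lhs => enter [1]; rw [inversionDefect]
  rw [smul_dotProduct, sub_dotProduct, smul_dotProduct, smul_dotProduct,
    hH.grad_dotProduct_inversionDefect hy, smul_zero, sub_zero, smul_eq_mul, smul_eq_mul]
  ring

end IsSmoothGauge

end SolutionIdentities

section Rigidity

lemma integral_sub_mean_sq {α : Type*} [MeasurableSpace α] {μ : Measure α} [IsFiniteMeasure μ]
    (hμ : μ.real Set.univ ≠ 0) {f : α → ℝ} (hf : Integrable f μ)
    (hf_sq : Integrable (fun x ↦ f x ^ 2) μ) :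
    ∫ x, (f x - (∫ z, f z ∂μ) / μ.real Set.univ) ^ 2 ∂μ =
      (∫ x, f x ^ 2 ∂μ) - (∫ x, f x ∂μ) ^ 2 / μ.real Set.univ := by
  set m := (∫ z, f z ∂μ) / μ.real Set.univ with hm
  have hexpand (x : α) : (f x - m) ^ 2 = f x ^ 2 + -(2 * m) * f x + m ^ 2 := by ring
  simp only [hexpand]
  rw [integral_add_const_mul_add_const hf_sq hf, hm]
  field_simp
  ring

variable {n : ℕ} {H f g : Euc n → ℝ} {a b : ℝ} {y : Euc n}

lemma SmoothHomog.eq_of_forall_sphere {k : ℤ} (hf : SmoothHomog k f) (hg : SmoothHomog k g)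
    (h : ∀ x : sphere (0 : Euc n) 1, f x = g x) (hy : y ≠ 0) : f y = g y := by
  rw [hf.apply_eq_norm_zpow_mul hy, hg.apply_eq_norm_zpow_mul hy,
    h ⟨_, inv_norm_smul_mem_unit_sphere hy⟩]

namespace IsSmoothGauge

lemma eq_zero_of_integral_sq_nonpos (hH : IsSmoothGauge H) {g : sphere (0 : Euc n) 1 → ℝ}
    (hg : Continuous g) (h : ∫ x, g x ^ 2 ∂gaugeMeasure H ≤ 0) : g = 0 := by
  have := hH.isFiniteMeasure
  have := hH.isOpenPosMeasure
  have hnonneg : 0 ≤ fun x ↦ g x ^ 2 := fun x ↦ sq_nonneg (g x)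
  have hzero := (integral_eq_zero_iff_of_nonneg hnonneg
    ((hg.pow 2).integrable_of_hasCompactSupport (.of_compactSpace _))).1
      (h.antisymm (integral_nonneg hnonneg))
  ext x
  exact sq_eq_zero_iff.1 (congrFun (((hg.pow 2).ae_eq_iff_eq _ continuous_zero).1 hzero) x)

lemma smoothHomog_gradNormSq_rpow_mul (hH : IsSmoothGauge H) (hf : SmoothHomog 1 f) (r : ℝ) :
    SmoothHomog 1 fun y ↦ gradNormSq H y ^ r * f y :=
  ((hH.smoothHomog_gradNormSq.rpow (fun _ hy ↦ (hH.gradNormSq_pos hy).ne') r).mul hf).of_eq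
    (zero_add 1)

lemma inv_mulVec_grad_gradNormSq_rpow_mul (hH : IsSmoothGauge H) (hf : SmoothHomog 1 f)
    (hy : y ≠ 0) (a : ℝ) :
    (gaugeMetric H y)⁻¹ *ᵥ grad (fun z ↦ gradNormSq H z ^ (-(a / 2)) * f z) y =
      gradNormSq H y ^ (-(a / 2)) • ((gaugeMetric H y)⁻¹ *ᵥ grad f y +
        (a * f y / H y) • ((H y)⁻¹ • ⇑y - (gradNormSq H y)⁻¹ • grad H y)) := by
  have hHy := hH.ne_zero hy
  have hρ := hH.gradNormSq_pos hy
  have hρdiff := hH.smoothHomog_gradNormSq.differentiableAt hy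
  have hrpow := (hH.smoothHomog_gradNormSq.rpow (fun _ hz ↦ (hH.gradNormSq_pos hz).ne')
    (-(a / 2))).differentiableAt hy
  rw [grad_mul hrpow (hf.differentiableAt hy), grad_rpow hρdiff hρ, mulVec_add, mulVec_smul,
    mulVec_smul, mulVec_smul, hH.inv_mulVec_grad_gradNormSq hy]
  ext i
  simp only [Pi.smul_apply, Pi.sub_apply, Pi.add_apply, smul_eq_mul]
  field_simp
  ring

-- The gap between the two sides is `b (1 - b)` times a nonnegative function.
lemma sum_gradEnergy_add_le (hH : IsSmoothGauge H) (hb : 0 ≤ b) (hb' : b ≤ 1) (hy : y ≠ 0)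
    (a : ℝ) :
    (∑ i, gradEnergy H (fun z ↦ radialWeight H b z * z i) y) +
        a * ∑ i, inversionDefect H b y i ^ 2 ≤
      ∑ i, (radialWeight H b y *
          ((gaugeMetric H y)⁻¹ *ᵥ grad (fun z ↦ radialWeight H b z * z i) y) i +
        a * (radialWeight H b y * y i / H y) * inversionDefect H b y i) := by
  have hdefect : ∑ i, a * (radialWeight H b y * y i / H y) * inversionDefect H b y i =
      a * ∑ i, inversionDefect H b y i ^ 2 := by
    have h := hH.inversionDefect_dotProduct_self hy b
    simp only [dotProduct, ← sq] at h
    rw [h, Finset.mul_sum, Finset.mul_sum]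
    exact Finset.sum_congr rfl fun i _ ↦ by ring
  rw [Finset.sum_add_distrib, ← Finset.mul_sum, hdefect, add_le_add_iff_right,
    hH.sum_gradEnergy_radialWeight_mul_coord hy, hH.sum_inv_mulVec_grad_radialWeight_mul_coord hy]
  have hgap := mul_nonneg (mul_nonneg hb (sub_nonneg.2 hb'))
    (mul_nonneg (sq_nonneg (radialWeight H b y)) (hH.slopeEnergy_nonneg hy))
  linarith

end IsSmoothGauge

namespace IsDualMinkowskiGauge

lemma det_mul_gradNormSq_rpow (hH : IsDualMinkowskiGauge a b H) (hy : y ≠ 0) :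
    (gaugeMetric H y).det * gradNormSq H y ^ (-(a / 2)) = radialWeight H b y := by
  have hρ := hH.gradNormSq_pos hy
  rw [hH.det_eq y hy, mul_right_comm, ← Real.rpow_add hρ, add_neg_cancel, Real.rpow_zero, one_mul]

lemma det_mul_inv_mulVec_grad (hH : IsDualMinkowskiGauge a b H) (hf : SmoothHomog 1 f)
    (hy : y ≠ 0) (i : Fin (n + 1)) :
    (gaugeMetric H y).det *
        ((gaugeMetric H y)⁻¹ *ᵥ grad (fun z ↦ gradNormSq H z ^ (-(a / 2)) * f z) y) i =
      radialWeight H b y * ((gaugeMetric H y)⁻¹ *ᵥ grad f y) i +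
        a * (f y / H y) * inversionDefect H b y i := by
  rw [hH.inv_mulVec_grad_gradNormSq_rpow_mul hf hy, inversionDefect]
  simp only [Pi.smul_apply, Pi.add_apply, smul_eq_mul]
  rw [← mul_assoc, hH.det_mul_gradNormSq_rpow hy]
  ring

lemma integral_radialWeight_mul (hH : IsDualMinkowskiGauge a b H) (hf : SmoothHomog 1 f)
    (i : Fin (n + 1)) :
    ∫ x : sphere (0 : Euc n) 1, (radialWeight H b x * ((gaugeMetric H x)⁻¹ *ᵥ grad f x) i +
        a * (f x / H x) * inversionDefect H b x i) ∂gaugeMeasure H =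
      (n + 1) * ∫ x : sphere (0 : Euc n) 1, f x / H x * (radialWeight H b x * x.1 i / H x)
        ∂gaugeMeasure H := by
  have h := hH.integral_det_mul_inv_mulVec_grad
    (hH.smoothHomog_gradNormSq_rpow_mul hf (-(a / 2))) i
  simp_rw [hH.det_mul_inv_mulVec_grad hf (ne_zero_of_mem_unit_sphere _)] at h
  rw [h]
  congr 2
  ext x
  rw [← hH.det_mul_gradNormSq_rpow (ne_zero_of_mem_unit_sphere x)]
  ring

lemma integral_radialWeight_mul_coord (hH : IsDualMinkowskiGauge a b H) (i : Fin (n + 1)) :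
    n * ∫ x : sphere (0 : Euc n) 1, radialWeight H b x * x.1 i / H x ∂gaugeMeasure H =
      a * ∫ x : sphere (0 : Euc n) 1, inversionDefect H b x i ∂gaugeMeasure H := by
  have h := hH.integral_radialWeight_mul hH.smoothHomog i
  have hleft (x : sphere (0 : Euc n) 1) :
      radialWeight H b x * ((gaugeMetric H x)⁻¹ *ᵥ grad H x) i +
        a * (H x / H x) * inversionDefect H b x i =
      radialWeight H b x * x.1 i / H x + a * inversionDefect H b x i := by
    rw [hH.inv_mulVec_grad (ne_zero_of_mem_unit_sphere x), div_self (hH.pos_sphere x).ne',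
      Pi.smul_apply, smul_eq_mul]
    ring
  simp_rw [hleft, div_self (hH.pos_sphere _).ne', one_mul] at h
  rw [integral_add (hH.integrable (hH.smoothHomog_div (hH.smoothHomog_radialWeight_mul_coord b i)))
    ((hH.integrable (hH.smoothHomog_inversionDefect b i)).const_mul a), integral_const_mul] at h
  linarith

lemma mul_sum_integral_inversionDefect_sq_le (hH : IsDualMinkowskiGauge a b H) (hb : 0 ≤ b)
    (hb' : b ≤ 1) :
    a * ∑ i, ∫ x : sphere (0 : Euc n) 1, inversionDefect H b x i ^ 2 ∂gaugeMeasure H ≤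
      ∑ i, n * (∫ x : sphere (0 : Euc n) 1, radialWeight H b x * x.1 i / H x ∂gaugeMeasure H) ^ 2 /
        (gaugeMeasure H).real Set.univ := by
  have hG := hH.smoothHomog_radialWeight_mul_coord b
  have henergy (i) := hH.integrable (hH.smoothHomog_gradEnergy (hG i))
  have hsq (i) := hH.integrable ((hH.smoothHomog_inversionDefect b i).pow 2)
  have hflux (i) := hH.integrable <|
    (((hH.smoothHomog_radialWeight b).mul (hH.smoothHomog_inv_mulVec_grad (hG i) i)).of_eq
      (zero_add 0)).add ((((hH.smoothHomog_div (hG i)).const_mul a).mul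
        (hH.smoothHomog_inversionDefect b i)).of_eq (zero_add 0))
  have hintegrated := integral_mono
    ((integrable_finsetSum Finset.univ fun i _ ↦ henergy i).add
      ((integrable_finsetSum Finset.univ fun i _ ↦ hsq i).const_mul a))
    (integrable_finsetSum Finset.univ fun i _ ↦ hflux i)
    fun x ↦ hH.sum_gradEnergy_add_le hb hb' (ne_zero_of_mem_unit_sphere x) a
  simp only [Pi.add_apply] at hintegrated
  rw [integral_add (integrable_finsetSum _ fun i _ ↦ henergy i)
    ((integrable_finsetSum _ fun i _ ↦ hsq i).const_mul a), integral_const_mul,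
    integral_finsetSum _ fun i _ ↦ henergy i, integral_finsetSum _ fun i _ ↦ hsq i,
    integral_finsetSum _ fun i _ ↦ hflux i] at hintegrated
  have hpoincare := Finset.sum_le_sum fun i (_ : i ∈ Finset.univ) ↦ hH.integral_div_sq_le (hG i)
  simp_rw [hH.integral_radialWeight_mul (hG _), ← sq] at hintegrated
  rw [Finset.sum_add_distrib] at hpoincare
  linarith

lemma mul_sq_integral_radialWeight_mul_coord_div_le (hH : IsDualMinkowskiGauge a b H)
    (ha : 0 < a) (han : a ≤ n) (i : Fin (n + 1)) :
    n * (∫ x : sphere (0 : Euc n) 1, radialWeight H b x * x.1 i / H x ∂gaugeMeasure H) ^ 2 /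
        (gaugeMeasure H).real Set.univ ≤
      a * ((∫ x : sphere (0 : Euc n) 1, inversionDefect H b x i ∂gaugeMeasure H) ^ 2 /
        (gaugeMeasure H).real Set.univ) := by
  have hn : (0 : ℝ) < n := ha.trans_le han
  rw [(eq_div_iff hn.ne').2 ((mul_comm _ _).trans (hH.integral_radialWeight_mul_coord i)),
    ← mul_div_assoc]
  refine div_le_div_of_nonneg_right ?_ measureReal_nonneg
  generalize (∫ x : sphere (0 : Euc n) 1, inversionDefect H b x i ∂gaugeMeasure H) = s
  calc n * (a * s / n) ^ 2 = a * s ^ 2 * (a / n) := by field_simp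
    _ ≤ a * s ^ 2 := mul_le_of_le_one_right (by positivity) ((div_le_one hn).2 han)

lemma sum_integral_inversionDefect_sq_le (hH : IsDualMinkowskiGauge a b H) (ha : 0 < a)
    (han : a ≤ n) (hb : 0 ≤ b) (hb' : b ≤ 1) :
    ∑ i, ∫ x : sphere (0 : Euc n) 1, inversionDefect H b x i ^ 2 ∂gaugeMeasure H ≤
      ∑ i, (∫ x : sphere (0 : Euc n) 1, inversionDefect H b x i ∂gaugeMeasure H) ^ 2 /
        (gaugeMeasure H).real Set.univ := by
  refine le_of_mul_le_mul_left ((hH.mul_sum_integral_inversionDefect_sq_le hb hb').trans ?_) ha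
  rw [Finset.mul_sum]
  exact Finset.sum_le_sum fun i _ ↦ hH.mul_sq_integral_radialWeight_mul_coord_div_le ha han i

lemma integral_inversionDefect_sub_mean_sq_nonpos (hH : IsDualMinkowskiGauge a b H) (ha : 0 < a)
    (han : a ≤ n) (hb : 0 ≤ b) (hb' : b ≤ 1) (i : Fin (n + 1)) :
    ∫ x : sphere (0 : Euc n) 1, (inversionDefect H b x i -
      (∫ z : sphere (0 : Euc n) 1, inversionDefect H b z i ∂gaugeMeasure H) /
        (gaugeMeasure H).real Set.univ) ^ 2 ∂gaugeMeasure H ≤ 0 := by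
  have := hH.isFiniteMeasure
  have hint (j) := hH.integrable (hH.smoothHomog_inversionDefect b j)
  have hint_sq (j) := hH.integrable ((hH.smoothHomog_inversionDefect b j).pow 2)
  have hvariance (j) :=
    integral_sub_mean_sq hH.measureReal_univ_pos.ne' (hint j) (hint_sq j)
  refine (Finset.single_le_sum (f := fun j ↦ ∫ x : sphere (0 : Euc n) 1, (inversionDefect H b x j -
      (∫ z : sphere (0 : Euc n) 1, inversionDefect H b z j ∂gaugeMeasure H) /
        (gaugeMeasure H).real Set.univ) ^ 2 ∂gaugeMeasure H)
    (fun j _ ↦ integral_nonneg fun x ↦ sq_nonneg _) (Finset.mem_univ i)).trans ?_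
  simp only [hvariance, Finset.sum_sub_distrib]
  exact sub_nonpos.2 (hH.sum_integral_inversionDefect_sq_le ha han hb hb')

lemma exists_inversionDefect_eq_const (hH : IsDualMinkowskiGauge a b H) (ha : 0 < a) (han : a ≤ n)
    (hb : 0 ≤ b) (hb' : b ≤ 1) : ∃ c, ∀ y ≠ 0, inversionDefect H b y = c := by
  refine ⟨fun i ↦ (∫ z : sphere (0 : Euc n) 1, inversionDefect H b z i ∂gaugeMeasure H) /
    (gaugeMeasure H).real Set.univ, fun y hy ↦ funext fun i ↦
    (hH.smoothHomog_inversionDefect b i).eq_of_forall_sphere (.const _) (fun x ↦ ?_) hy⟩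
  exact sub_eq_zero.1 <| congrFun (hH.eq_zero_of_integral_sq_nonpos
    ((hH.smoothHomog_inversionDefect b i).continuous_sphere.sub continuous_const)
    (hH.integral_inversionDefect_sub_mean_sq_nonpos ha han hb hb' i)) x

end IsDualMinkowskiGauge

namespace IsSmoothGauge

-- At `y = c`, the orthogonality of `c` and `grad H c` contradicts Euler's relation.
lemma eq_zero_of_inversionDefect_eq_const (hH : IsSmoothGauge H) {c : Fin (n + 1) → ℝ}
    (hc : ∀ y ≠ 0, inversionDefect H b y = c) : c = 0 := by
  by_contra hne
  have hy : WithLp.toLp 2 c ≠ 0 := by simpa using hne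
  apply hH.ne_zero hy
  rw [← hH.dotProduct_grad_self hy, dotProduct_comm]
  simpa only [hc _ hy] using hH.grad_dotProduct_inversionDefect hy b

lemma logSlope_eq_zero (hH : IsSmoothGauge H) (hy : y ≠ 0) (h : inversionDefect H b y = 0) :
    logSlope H y = 0 := by
  have hHy := hH.ne_zero hy
  have hρ := (hH.gradNormSq_pos hy).ne'
  have hcollinear : (gradNormSq H y)⁻¹ • grad H y = (H y)⁻¹ • ⇑y :=
    (sub_eq_zero.1 ((smul_eq_zero.1 h).resolve_left (hH.radialWeight_pos hy b).ne')).symm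
  have hratio : (gradNormSq H y)⁻¹ * H y = (H y)⁻¹ * ‖y‖ ^ 2 := by
    simpa [dotProduct_smul, hH.dotProduct_grad_self hy, dotProduct_self_eq_norm_sq] using
      congrArg (⇑y ⬝ᵥ ·) hcollinear
  rw [inv_mul_eq_iff_eq_mul₀ hρ] at hratio
  have hcoeff : (H y)⁻¹ * (gradNormSq H y * (H y)⁻¹) = (‖y‖ ^ 2)⁻¹ := by
    refine eq_inv_of_mul_eq_one_left ?_
    rw [mul_assoc, mul_assoc, ← hratio, inv_mul_cancel₀ hHy]
  rw [inv_smul_eq_iff₀ hρ, smul_smul] at hcollinear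
  rw [logSlope, hcollinear, smul_smul, ← sub_smul, hcoeff, sub_self, zero_smul]

lemma exists_eq_mul_norm (hH : IsSmoothGauge H) (hn : 1 ≤ n) (h : ∀ y ≠ 0, logSlope H y = 0) :
    ∃ c > 0, ∀ y, H y = c * ‖y‖ := by
  have hconnected : IsPreconnected ({0}ᶜ : Set (Euc n)) := by
    refine (isConnected_compl_singleton_of_one_lt_rank ?_ 0).isPreconnected
    rw [← Module.finrank_eq_rank, finrank_euclideanSpace_fin]
    exact_mod_cast Nat.lt_add_of_pos_left hn
  have hfderiv : Set.EqOn (fderiv ℝ fun z ↦ H z / ‖z‖) 0 {0}ᶜ := fun y hy ↦ by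
    ext v
    simp [fderiv_eq_grad_dotProduct, hH.grad_div_norm hy, h y hy]
  obtain ⟨e, he⟩ := exists_ne (0 : Euc n)
  refine ⟨H e / ‖e‖, hH.div_norm_pos he, fun y ↦ ?_⟩
  rcases eq_or_ne y 0 with rfl | hy
  · simp [hH.smoothHomog.map_zero]
  · rw [← isOpen_compl_singleton.is_const_of_fderiv_eq_zero hconnected
      (fun z hz ↦ (hH.smoothHomog_div_norm.differentiableAt hz).differentiableWithinAt) hfderiv
      hy he, div_mul_cancel₀ _ (norm_ne_zero_iff.2 hy)]

end IsSmoothGauge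

section MulNorm

variable {c : ℝ}

lemma grad_eq_of_forall_eq_mul_norm (h : ∀ z, H z = c * ‖z‖) (hy : y ≠ 0) :
    grad H y = (c / ‖y‖) • ⇑y := by
  rw [funext h, grad_mul (differentiableAt_const c) (SmoothHomog.norm.differentiableAt hy),
    grad_norm hy, grad_const, smul_zero, add_zero, smul_smul, div_eq_mul_inv]

lemma gradNormSq_eq_of_forall_eq_mul_norm (h : ∀ z, H z = c * ‖z‖) (hy : y ≠ 0) :
    gradNormSq H y = c ^ 2 := by
  have hny := norm_ne_zero_iff.2 hy
  rw [gradNormSq, grad_eq_of_forall_eq_mul_norm h hy, smul_dotProduct, dotProduct_smul,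
    dotProduct_self_eq_norm_sq, smul_eq_mul, smul_eq_mul]
  field_simp

lemma gaugeMetric_eq_of_forall_eq_mul_norm (h : ∀ z, H z = c * ‖z‖) (hy : y ≠ 0) :
    gaugeMetric H y = c ^ 2 • 1 := by
  have hH : SmoothHomog 1 H := funext h ▸ SmoothHomog.norm.const_mul c
  ext i j
  have hlinear : Set.EqOn (fun z ↦ H z * grad H z j) (fun z ↦ c ^ 2 * z j) {0}ᶜ := fun z hz ↦ by
    have hnz := norm_ne_zero_iff.2 hz
    simp only [grad_eq_of_forall_eq_mul_norm h hz, h z, Pi.smul_apply, smul_eq_mul]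
    field_simp
  rw [hH.gaugeMetric_eq_grad hy, grad_congr (isOpen_compl_singleton.mem_nhds hy) hlinear,
    grad_mul (differentiableAt_const _) ((SmoothHomog.coord j).differentiableAt hy), grad_const,
    grad_coord]
  simp [Matrix.one_apply, Pi.single_apply]

end MulNorm

namespace IsDualMinkowskiGauge

lemma eq_one_of_forall_eq_mul_norm (hH : IsDualMinkowskiGauge a b H) {c : ℝ} (hc : 0 < c)
    (hab : a + b < 2 * (n + 1)) (h : ∀ y, H y = c * ‖y‖) : c = 1 := by
  obtain ⟨y, hy⟩ := exists_ne (0 : Euc n)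
  have hdet := hH.det_eq y hy
  rw [gaugeMetric_eq_of_forall_eq_mul_norm h hy, gradNormSq_eq_of_forall_eq_mul_norm h hy,
    radialWeight, h, mul_div_cancel_right₀ _ (norm_ne_zero_iff.2 hy), det_smul, det_one, mul_one,
    Fintype.card_fin] at hdet
  have hlog := congrArg Real.log hdet
  rw [Real.log_mul (by positivity) (by positivity), Real.log_rpow (by positivity),
    Real.log_rpow hc, Real.log_pow, Real.log_pow] at hlog
  push_cast at hlog
  have hfactor : (2 * (n + 1) - (a + b)) * Real.log c = 0 := by linarith
  exact Real.eq_one_of_pos_of_log_eq_zero hc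
    ((mul_eq_zero.1 hfactor).resolve_left (sub_pos.2 hab).ne')

theorem eq_norm (hH : IsDualMinkowskiGauge a b H) (ha : 0 < a) (han : a ≤ n) (hb : 0 ≤ b)
    (hb' : b ≤ 1) (y : Euc n) : H y = ‖y‖ := by
  have hn : 1 ≤ n := Nat.cast_pos.1 (ha.trans_le han)
  obtain ⟨c, hc⟩ := hH.exists_inversionDefect_eq_const ha han hb hb'
  obtain rfl := hH.eq_zero_of_inversionDefect_eq_const hc
  obtain ⟨r, hr, hnorm⟩ := hH.exists_eq_mul_norm hn fun y hy ↦ hH.logSlope_eq_zero hy (hc y hy)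
  obtain rfl := hH.eq_one_of_forall_eq_mul_norm hr (by linarith) hnorm
  rw [hnorm, one_mul]

end IsDualMinkowskiGauge

end Rigidity

section SupportFunction

lemma exists_det_eq_one_and_eq_conj {ι : Type*} [Fintype ι] [DecidableEq ι] {B : Matrix ι ι ℝ}
    {x X : ι → ℝ} {h : ℝ} (hh : h ≠ 0) (hB : B.IsSymm) (hBx : B *ᵥ x = h • x)
    (hx : x ⬝ᵥ x = 1) (hX : X ⬝ᵥ x = h) :
    ∃ E : Matrix ι ι ℝ, E.det = 1 ∧
      vecMulVec X X + h • (B - h • vecMulVec x x) = Eᴴ * (h • B) * E := by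
  obtain ⟨v, rfl⟩ : ∃ v, X = h • (v + x) := ⟨h⁻¹ • X - x, by simp [smul_inv_smul₀ hh]⟩
  have hvx : v ⬝ᵥ x = 0 := by
    simpa [smul_dotProduct, add_dotProduct, hx, hh] using hX
  have hxB : x ᵥ* B = h • x := by rw [← hB.eq, vecMul_transpose, hBx]
  refine ⟨1 + vecMulVec x v, ?_, ?_⟩
  · rw [vecMulVec_eq Unit, det_one_add_replicateCol_mul_replicateRow, hvx, add_zero]
  · have hE : (1 + vecMulVec x v)ᴴ = 1 + vecMulVec v x := by
      simp [conjTranspose_eq_transpose_of_trivial, transpose_vecMulVec]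
    have hright : B * (1 + vecMulVec x v) = B + h • vecMulVec x v := by
      rw [mul_add, mul_one, mul_vecMulVec, hBx, smul_vecMulVec]
    have hleft : vecMulVec v x * B = h • vecMulVec v x := by
      rw [vecMulVec_mul, hxB, vecMulVec_smul]
    have hcross : vecMulVec v x * vecMulVec x v = vecMulVec v v := by
      rw [vecMulVec_mul_vecMulVec, hx, one_smul]
    rw [hE, mul_assoc, smul_mul, hright, mul_smul_comm, add_mul, one_mul, mul_add, hleft,
      mul_smul_comm, hcross]
    ext i j
    simp only [Matrix.smul_apply, Matrix.add_apply, Matrix.sub_apply, vecMulVec_apply, smul_eq_mul,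
      Pi.smul_apply, Pi.add_apply]
    ring

variable {n : ℕ} {H : Euc n → ℝ} {x : Euc n} {p q : ℝ}

lemma bmat_eq_ehess_add (H : Euc n → ℝ) (x : Euc n) :
    bmat n H x = ehess n H x + H x • vecMulVec ⇑x ⇑x := by
  ext i j
  simp [bmat, vecMulVec_apply]

namespace SmoothHomog

lemma isSymm_bmat {k : ℤ} (hH : SmoothHomog k H) (hx : x ≠ 0) : (bmat n H x).IsSymm := by
  rw [bmat_eq_ehess_add]
  exact (hH.isSymm_ehess hx).add (.smul (transpose_vecMulVec _ _) _)

lemma ehess_mulVec_self (hH : SmoothHomog 1 H) (hx : x ≠ 0) : ehess n H x *ᵥ ⇑x = 0 := by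
  rw [← (hH.isSymm_ehess hx).eq, mulVec_transpose]
  ext j
  exact ((hH.grad_apply j).dotProduct_grad hx).trans (by simp)

lemma bmat_mulVec_self (hH : SmoothHomog 1 H) (hx : ‖x‖ = 1) :
    bmat n H x *ᵥ ⇑x = H x • ⇑x := by
  have hx0 : x ≠ 0 := norm_ne_zero_iff.1 (hx.trans_ne one_ne_zero)
  rw [bmat_eq_ehess_add, add_mulVec, hH.ehess_mulVec_self hx0, smul_mulVec, vecMulVec_mulVec,
    dotProduct_self_eq_norm_sq, hx]
  simp

lemma exists_gaugeMetric_eq_conj_bmat (hH : SmoothHomog 1 H) (hx : ‖x‖ = 1) (hpos : 0 < H x) :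
    ∃ E : Matrix (Fin (n + 1)) (Fin (n + 1)) ℝ, E.det = 1 ∧
      gaugeMetric H x = Eᴴ * (H x • bmat n H x) * E := by
  have hx0 : x ≠ 0 := norm_ne_zero_iff.1 (hx.trans_ne one_ne_zero)
  have hmetric : gaugeMetric H x = vecMulVec (grad H x) (grad H x) +
      H x • (bmat n H x - H x • vecMulVec ⇑x ⇑x) := by
    rw [gaugeMetric, bmat_eq_ehess_add, add_sub_cancel_right]
  rw [hmetric]
  refine exists_det_eq_one_and_eq_conj hpos.ne' (hH.isSymm_bmat hx0) (hH.bmat_mulVec_self hx) ?_ ?_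
  · rw [dotProduct_self_eq_norm_sq, hx, one_pow]
  · rw [dotProduct_comm, hH.dotProduct_grad hx0, Int.cast_one, one_mul]

lemma posDef_gaugeMetric_of_bmat (hH : SmoothHomog 1 H) (hx : ‖x‖ = 1) (hpos : 0 < H x)
    (hbmat : (bmat n H x).PosDef) : (gaugeMetric H x).PosDef := by
  obtain ⟨E, hE, hconj⟩ := hH.exists_gaugeMetric_eq_conj_bmat hx hpos
  rw [hconj]
  refine (hbmat.smul hpos).conjTranspose_mul_mul_same (mulVec_injective_of_isUnit ?_)
  rw [isUnit_iff_isUnit_det, hE]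
  exact isUnit_one

lemma det_gaugeMetric_eq (hH : SmoothHomog 1 H) (hx : ‖x‖ = 1) (hpos : 0 < H x) :
    (gaugeMetric H x).det = H x ^ (n + 1) * (bmat n H x).det := by
  obtain ⟨E, hE, hconj⟩ := hH.exists_gaugeMetric_eq_conj_bmat hx hpos
  simp [hconj, hE]

lemma isSmoothGauge (hH : SmoothHomog 1 H) (hpos : ∀ x ∈ sphere (0 : Euc n) 1, 0 < H x)
    (hposdef : ∀ x ∈ sphere (0 : Euc n) 1, (bmat n H x).PosDef) : IsSmoothGauge H where
  smoothHomog := hH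
  pos y hy := by
    rw [hH.apply_eq_norm_zpow_mul hy, zpow_one]
    exact mul_pos (norm_pos_iff.2 hy) (hpos _ (inv_norm_smul_mem_unit_sphere hy))
  posDef y hy := by
    have hx := inv_norm_smul_mem_unit_sphere hy
    have hmetric : gaugeMetric H y = gaugeMetric H (‖y‖⁻¹ • y) := by
      ext i j
      simpa using (hH.gaugeMetric_apply i j).apply_eq_norm_zpow_mul hy
    rw [hmetric]
    exact hH.posDef_gaugeMetric_of_bmat (mem_sphere_zero_iff_norm.1 hx) (hpos _ hx) (hposdef _ hx)

end SmoothHomog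

lemma norm_gradient_rpow (H : Euc n → ℝ) (x : Euc n) (a : ℝ) :
    ‖gradient H x‖ ^ a = gradNormSq H x ^ (a / 2) := by
  have hsq : gradNormSq H x = ‖gradient H x‖ ^ 2 := by
    rw [gradient_eq_toLp_grad, ← dotProduct_self_eq_norm_sq, gradNormSq]
  rw [hsq, ← Real.rpow_natCast_mul (norm_nonneg _)]
  congr 1
  push_cast
  ring

namespace IsSmoothGauge

lemma det_bmat_eq (hH : IsSmoothGauge H) (hx : x ≠ 0)
    (heq : H x ^ (p - 1) * ‖gradient H x‖ ^ ((n : ℝ) + 1 - q) * gaussCurv n H x = 1) :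
    (bmat n H x).det = H x ^ p * gradNormSq H x ^ (((n : ℝ) + 1 - q) / 2) := by
  have hHx := hH.pos x hx
  rw [norm_gradient_rpow, gaussCurv] at heq
  have hsigma := eq_of_mul_inv_eq_one heq
  rw [sigman, eq_div_iff hHx.ne', Real.rpow_sub_one hHx.ne'] at hsigma
  rw [← hsigma]
  field_simp

lemma isDualMinkowskiGauge (hH : IsSmoothGauge H) (heq : ∀ x ∈ sphere (0 : Euc n) 1,
      H x ^ (p - 1) * ‖gradient H x‖ ^ ((n : ℝ) + 1 - q) * gaussCurv n H x = 1) :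
    IsDualMinkowskiGauge (n + 1 - q) (n + 1 + p) H where
  toIsSmoothGauge := hH
  det_eq y hy := by
    refine hH.smoothHomog.det_gaugeMetric.eq_of_forall_sphere
      (((hH.smoothHomog_gradNormSq.rpow (fun _ hz ↦ (hH.gradNormSq_pos hz).ne') _).mul
        (hH.smoothHomog_radialWeight _)).of_eq (zero_add 0)) (fun x ↦ ?_) hy
    have hnorm := norm_eq_of_mem_sphere x
    have hpos := hH.pos_sphere x
    rw [hH.smoothHomog.det_gaugeMetric_eq hnorm hpos,
      hH.det_bmat_eq (ne_zero_of_mem_unit_sphere x) (heq x x.2), radialWeight, hnorm, div_one,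
      Real.rpow_add hpos, ← Nat.cast_add_one, Real.rpow_natCast]
    push_cast
    ring

end IsSmoothGauge

lemma setOf_forall_inner_le_norm {E : Type*} [NormedAddCommGroup E] [InnerProductSpace ℝ E] :
    {y : E | ∀ x : E, ⟪x, y⟫ ≤ ‖x‖} = closedBall 0 1 := by
  ext y
  rw [Set.mem_ofPred_eq, mem_closedBall_zero_iff]
  refine ⟨fun h ↦ ?_, fun hy x ↦ (real_inner_le_norm x y).trans
    (mul_le_of_le_one_right (norm_nonneg x) hy)⟩
  by_contra! hy
  have hself := h y
  rw [real_inner_self_eq_norm_sq] at hself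
  nlinarith

end SupportFunction

theorem isotropic_Lp_dual_Minkowski_uniqueness_case2_general
    (n : ℕ) (p q : ℝ)
    (H : Euc n → ℝ) (K : Set (Euc n))
    (hK : K = {y : Euc n | ∀ x : Euc n, ⟪x, y⟫ ≤ H x})
    (hhomog : ∀ c : ℝ, 0 < c → ∀ x : Euc n, H (c • x) = c * H x)
    (hsmooth : ContDiffOn ℝ (⊤ : ℕ∞) H {(0 : Euc n)}ᶜ)
    (hpos : ∀ x ∈ sphere (0 : Euc n) 1, 0 < H x)
    (hposdef : ∀ x ∈ sphere (0 : Euc n) 1, (bmat n H x).PosDef)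
    (heq : ∀ x ∈ sphere (0 : Euc n) 1,
      H x ^ (p - 1) * ‖gradient H x‖ ^ ((n : ℝ) + 1 - q) * gaussCurv n H x = 1)
    (hp1 : -((n : ℝ) + 1) ≤ p) (hp2 : p ≤ -(n : ℝ))
    (hq1 : (1 : ℝ) ≤ q) (hq2 : q < (n : ℝ) + 1) :
    frontier K = sphere (0 : Euc n) 1 := by
  have hH : SmoothHomog 1 H := ⟨hsmooth, by simpa only [zpow_one] using hhomog⟩
  have hgauge := (hH.isSmoothGauge hpos hposdef).isDualMinkowskiGauge heq
  have hnorm := hgauge.eq_norm (by linarith) (by linarith) (by linarith) (by linarith)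
  simp_rw [hK, hnorm, setOf_forall_inner_le_norm]
  exact frontier_closedBall 0 one_ne_zero

/-- If a smooth, closed, strictly convex hypersurface `M = ∂K` in `ℝ^{n+1}`
(`n ≥ 2`) enclosing the origin, with positive support function `h` (encoded by its
1-homogeneous extension `H`), satisfies the isotropic `L_p` dual Minkowski equation
`h^{p-1} |Dh|^{n+1-q} 𝒦 = 1` on `S^n`, with `-(n+1) ≤ p ≤ -n` and `1 ≤ q < n+1`,
then `M` is the unit sphere. -/
theorem isotropic_Lp_dual_Minkowski_uniqueness_case2
    (n : ℕ) (hn : 2 ≤ n) (p q : ℝ)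
    (H : Euc n → ℝ) (K : Set (Euc n))
    (hK : K = {y : Euc n | ∀ x : Euc n, ⟪x, y⟫ ≤ H x})
    (hhomog : ∀ c : ℝ, 0 < c → ∀ x : Euc n, H (c • x) = c * H x)
    (hconv : ConvexOn ℝ Set.univ H)
    (hsmooth : ContDiffOn ℝ (⊤ : ℕ∞) H {(0 : Euc n)}ᶜ)
    (hpos : ∀ x ∈ sphere (0 : Euc n) 1, 0 < H x)
    (hposdef : ∀ x ∈ sphere (0 : Euc n) 1, (bmat n H x).PosDef)
    (heq : ∀ x ∈ sphere (0 : Euc n) 1,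
      H x ^ (p - 1) * ‖gradient H x‖ ^ ((n : ℝ) + 1 - q) * gaussCurv n H x = 1)
    (hp1 : -((n : ℝ) + 1) ≤ p) (hp2 : p ≤ -(n : ℝ))
    (hq1 : (1 : ℝ) ≤ q) (hq2 : q < (n : ℝ) + 1) :
    frontier K = sphere (0 : Euc n) 1 :=
  isotropic_Lp_dual_Minkowski_uniqueness_case2_general n p q H K hK hhomog hsmooth hpos hposdef heq
    hp1 hp2 hq1 hq2
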